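/- arXiv:2002.02128 — 6 statements merged into one kernel-verified Lean document; each statement's English description precedes it below -/
import Mathlib

section
/- Let R be a commutative ring and A a commutative R-algebra such that A is a stably polynomial algebra over R, i.e., for some m, n ∈ ℕ the polynomial ring A[Z₁,…,Z_m] in m variables over A is isomorphic as an R-algebra to a polynomial ring in n + m variables over R. Then Ω_R(A) is a stably free A-module. -/
open TensorProduct

noncomputable section

/-- The residue field `κ(P) = R_P / P R_P` of a commutative ring `R` at a prime ideal `P`. -/
abbrev ResidueFieldAt (R : Type*) [CommRing R] (P : Ideal R) [P.IsPrime] : Type _ :=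
  IsLocalRing.ResidueField (Localization.AtPrime P)

/-- `A ⊗_R κ(P)` is a polynomial ring in `n` variables over `B ⊗_R κ(P)`
for every prime ideal `P` of `R`. -/
def FibersPolynomialOver (R B A : Type*) [CommRing R] [CommRing B] [CommRing A]
    [Algebra R B] [Algebra R A] [Algebra B A] [IsScalarTower R B A] (n : ℕ) : Prop :=
  ∀ (P : Ideal R) (_ : P.IsPrime),
    letI : Algebra (ResidueFieldAt R P ⊗[R] B) (ResidueFieldAt R P ⊗[R] A) :=
      (Algebra.TensorProduct.map (AlgHom.id R (ResidueFieldAt R P))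
        (IsScalarTower.toAlgHom R B A)).toRingHom.toAlgebra
    Nonempty ((ResidueFieldAt R P ⊗[R] A) ≃ₐ[ResidueFieldAt R P ⊗[R] B]
      MvPolynomial (Fin n) (ResidueFieldAt R P ⊗[R] B))

/-- `A` is an `𝔸ⁿ`-fibration over `R`: a finitely generated flat `R`-algebra all of whose
fibres are polynomial rings in `n` variables. -/
def IsAffineFibration (R A : Type*) [CommRing R] [CommRing A] [Algebra R A] (n : ℕ) : Prop :=
  Algebra.FiniteType R A ∧ Module.Flat R A ∧
  ∀ (P : Ideal R) (_ : P.IsPrime),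
    Nonempty ((ResidueFieldAt R P ⊗[R] A) ≃ₐ[ResidueFieldAt R P]
      MvPolynomial (Fin n) (ResidueFieldAt R P))

/-- `W` is an `m`-tuple residual variable of the `𝔸ⁿ`-fibration `A` over `R`. -/
def IsResidualVariable (R A : Type*) [CommRing R] [CommRing A] [Algebra R A]
    (n m : ℕ) (W : Fin m → A) : Prop :=
  AlgebraicIndependent R W ∧
  FibersPolynomialOver R (Algebra.adjoin R (Set.range W)) A (n - m)

/-- A module `M` over `A` is stably free if `M ⊕ Aˢ ≅ Aᵗ` for some `s, t`. -/
def IsStablyFree (A M : Type*) [CommRing A] [AddCommGroup M] [Module A M] : Prop :=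
  ∃ s t : ℕ, Nonempty ((M × (Fin s → A)) ≃ₗ[A] (Fin t → A))

end

/-!
A retraction `B → A` of an `R`-algebra map `A → B` makes the cotangent sequence split after base
change to `A`: the map `Ω[A⁄R] → A ⊗[B] Ω[B⁄R]` induced by `A → B` is undone by the one induced by
`B → A`, so `A ⊗[B] Ω[B⁄R] ≃ Ω[A⁄R] × (A ⊗[B] Ω[B⁄A])`. For `B = A[Z₁,…,Z_m]`, retracted onto `A`
by `Zᵢ ↦ 0`, both `Ω[B⁄R]` (as `B` is a polynomial ring over `R`) and `Ω[B⁄A]` are free of finite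
rank, and the complement `A ⊗[B] Ω[B⁄A]` can be cancelled.
-/

namespace IsStablyFree

variable {A B M N : Type*} [CommRing A] [CommRing B] [Algebra A B]
  [AddCommGroup M] [Module A M] [AddCommGroup N] [Module A N]

theorem of_prod_equiv {F G : Type*} [AddCommGroup F] [Module A F] [AddCommGroup G] [Module A G]
    [Module.Finite A F] [Module.Free A F] [Module.Finite A G] [Module.Free A G]
    (e : (M × F) ≃ₗ[A] G) : IsStablyFree A M := by
  let b := Module.Free.chooseBasis A F
  let c := Module.Free.chooseBasis A G
  let coordF := (b.reindex (Fintype.equivFin _)).equivFun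
  let coordG := (c.reindex (Fintype.equivFin _)).equivFun
  exact ⟨_, _, ⟨(LinearEquiv.refl A M).prodCongr coordF.symm ≪≫ₗ e ≪≫ₗ coordG⟩⟩

variable (A M) in
theorem of_finite_of_free [Module.Finite A M] [Module.Free A M] : IsStablyFree A M :=
  of_prod_equiv (LinearEquiv.prodUnique : (M × PUnit) ≃ₗ[A] M)

theorem of_equiv (e : M ≃ₗ[A] N) (h : IsStablyFree A M) : IsStablyFree A N := by
  obtain ⟨s, t, ⟨f⟩⟩ := h
  exact ⟨s, t, ⟨e.symm.prodCongr (.refl A _) ≪≫ₗ f⟩⟩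

variable (B) in
theorem baseChange (h : IsStablyFree A M) : IsStablyFree B (B ⊗[A] M) := by
  obtain ⟨s, t, ⟨f⟩⟩ := h
  exact of_prod_equiv ((TensorProduct.prodRight A B B M (Fin s → A)).symm ≪≫ₗ
    f.baseChange A B _ _)

theorem of_prod (hMN : IsStablyFree A (M × N)) (hN : IsStablyFree A N) : IsStablyFree A M := by
  obtain ⟨s, t, ⟨f⟩⟩ := hMN
  obtain ⟨u, v, ⟨g⟩⟩ := hN
  let replaceFree : (M × (Fin s → A) × (Fin v → A)) ≃ₗ[A]
      (M × (Fin s → A)) × (N × (Fin u → A)) :=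
    (LinearEquiv.prodAssoc A M _ _).symm ≪≫ₗ (LinearEquiv.refl A _).prodCongr g.symm
  let regroup : ((M × (Fin s → A)) × (N × (Fin u → A))) ≃ₗ[A]
      ((M × N) × (Fin s → A)) × (Fin u → A) :=
    LinearEquiv.prodProdProdComm A M _ N _ ≪≫ₗ (LinearEquiv.prodAssoc A (M × N) _ _).symm
  exact of_prod_equiv (replaceFree ≪≫ₗ regroup ≪≫ₗ f.prodCongr (.refl A _))

section KaehlerDifferential

variable {R S T : Type*} [CommRing R] [CommRing S] [CommRing T] [Algebra R S] [Algebra R T]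

theorem kaehler_of_formallyEtale [Algebra S T] [IsScalarTower R S T]
    [Algebra.FormallyEtale S T] (h : IsStablyFree S Ω[S⁄R]) : IsStablyFree T Ω[T⁄R] :=
  (h.baseChange T).of_equiv (KaehlerDifferential.tensorKaehlerEquivOfFormallyEtale R S T)

theorem kaehler_of_algEquiv (e : S ≃ₐ[R] T) (h : IsStablyFree S Ω[S⁄R]) :
    IsStablyFree T Ω[T⁄R] := by
  algebraize [e.toAlgHom.toRingHom]
  have : Algebra.FormallyEtale S T :=
    .of_equiv (AlgEquiv.ofBijective (Algebra.ofId S T) e.bijective)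
  exact h.kaehler_of_formallyEtale

variable (R) in
theorem kaehler_mvPolynomial (σ : Type*) [Finite σ] :
    IsStablyFree (MvPolynomial σ R) Ω[MvPolynomial σ R⁄R] :=
  .of_finite_of_free _ _

end KaehlerDifferential

end IsStablyFree

section Retract

variable (R A B : Type*) [CommRing R] [CommRing A] [CommRing B] [Algebra R A] [Algebra R B]
  [Algebra A B] [IsScalarTower R A B] [Algebra B A] [IsScalarTower A B A]

/-- The first map of the cotangent sequence of `R → A → B` after base change along `B → A`, sending
`da` to `1 ⊗ da`. Since `A → B → A` is the identity, its domain `A ⊗[B] (B ⊗[A] Ω[A⁄R])` is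
encoded as `Ω[A⁄R]`. -/
noncomputable def kaehlerToBaseChange : Ω[A⁄R] →ₗ[A] A ⊗[B] Ω[B⁄R] :=
  (TensorProduct.mk B A Ω[B⁄R] 1).restrictScalars A ∘ₗ KaehlerDifferential.map R R A B

theorem mapBaseChange_comp_kaehlerToBaseChange [IsScalarTower R B A] :
    KaehlerDifferential.mapBaseChange R B A ∘ₗ kaehlerToBaseChange R A B = LinearMap.id := by
  ext a
  simp [kaehlerToBaseChange, ← IsScalarTower.algebraMap_apply]

theorem exact_kaehlerToBaseChange_baseChange_map :
    Function.Exact (kaehlerToBaseChange R A B)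
      ((KaehlerDifferential.map R A B B).baseChange A) := by
  let contract : A ⊗[B] (B ⊗[A] Ω[A⁄R]) ≃ₗ[A] Ω[A⁄R] :=
    TensorProduct.AlgebraTensorModule.cancelBaseChange A B A A Ω[A⁄R] ≪≫ₗ
      TensorProduct.lid A Ω[A⁄R]
  have hcontract : kaehlerToBaseChange R A B ∘ₗ contract.toLinearMap =
      (KaehlerDifferential.mapBaseChange R A B).baseChange A := by
    ext x
    simp [kaehlerToBaseChange, contract]
  rw [← LinearEquiv.precomp_exact_iff_exact (e := contract), hcontract]
  exact lTensor_exact A (KaehlerDifferential.exact_mapBaseChange_map R A B)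
    (KaehlerDifferential.map_surjective R A B)

theorem nonempty_baseChange_kaehler_equiv_prod [IsScalarTower R B A] :
    Nonempty ((A ⊗[B] Ω[B⁄R]) ≃ₗ[A] Ω[A⁄R] × (A ⊗[B] Ω[B⁄A])) :=
  have hsurj : Function.Surjective ((KaehlerDifferential.map R A B B).baseChange A) :=
    LinearMap.lTensor_surjective A (KaehlerDifferential.map_surjective R A B)
  ⟨((exact_kaehlerToBaseChange_baseChange_map R A B).splitInjectiveEquiv hsurj
    ⟨_, mapBaseChange_comp_kaehlerToBaseChange R A B⟩).1⟩

end Retract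

theorem kaehler_stablyFree_of_stablyPolynomial_general
    {R A B : Type*} [CommRing R] [CommRing A] [CommRing B] [Algebra R A] [Algebra R B]
    [Algebra A B] [IsScalarTower R A B] (ε : B →ₐ[A] A)
    (hR : IsStablyFree B Ω[B⁄R]) (hA : IsStablyFree B Ω[B⁄A]) :
    IsStablyFree A Ω[A⁄R] := by
  algebraize [ε.toRingHom]
  have : IsScalarTower A B A := .of_algebraMap_eq fun a ↦ (ε.commutes a).symm
  have : IsScalarTower R B A := .of_algHom (ε.restrictScalars R)
  obtain ⟨split⟩ := nonempty_baseChange_kaehler_equiv_prod R A B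
  exact .of_prod ((hR.baseChange A).of_equiv split) (hA.baseChange A)

/-- If `A` is a stably polynomial algebra over `R` (i.e. `A[Z₁,…,Z_m] ≅ R^[n+m]` as
`R`-algebras for some `m, n`), then the module of Kähler differentials `Ω_R(A)` is a
stably free `A`-module. -/
theorem kaehler_stablyFree_of_stablyPolynomial
    (R A : Type*) [CommRing R] [CommRing A] [Algebra R A]
    (h : ∃ m n : ℕ,
      Nonempty (MvPolynomial (Fin m) A ≃ₐ[R] MvPolynomial (Fin (n + m)) R)) :
    IsStablyFree A (KaehlerDifferential R A) := by
  obtain ⟨m, n, ⟨e⟩⟩ := h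
  exact kaehler_stablyFree_of_stablyPolynomial_general (MvPolynomial.aeval (0 : Fin m → A))
    (.kaehler_of_algEquiv e.symm (.kaehler_mvPolynomial R _)) (.kaehler_mvPolynomial A _)
end

section
/- Let R be a commutative ring, A a commutative R-algebra, B₁ and B₂ R-subalgebras of A, and B the R-subalgebra of A generated by B₁ ∪ B₂. Suppose that for every prime ideal P of R, A ⊗_R κ(P) is isomorphic, as a (B ⊗_R κ(P))-algebra, to a polynomial ring in n variables over B ⊗_R κ(P). Then for every prime ideal Q of B₂, A ⊗_{B₂} κ(Q) is isomorphic, as a (B ⊗_{B₂} κ(Q))-algebra, to a polynomial ring in n variables over B ⊗_{B₂} κ(Q). -/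
open TensorProduct

/-!
The fibre of `A` over a prime `P` of `R` is the base change of the `B`-algebra `A` along
`B → κ(P) ⊗[R] B`, so the hypothesis says that each of these base changes is a polynomial algebra.
If `Q` is a prime of an intermediate ring `C` and `P` is its contraction to `R`, then
`B → κ(Q) ⊗[C] B` factors through `κ(P) ⊗[R] B`, and polynomial algebras are stable under base
change.
-/

theorem nonempty_algEquiv_mvPolynomial_of_algHom {B A S S' σ : Type*} [CommRing B] [CommRing A]
    [CommRing S] [CommRing S'] [Algebra B A] [Algebra B S] [Algebra B S'] (φ : S →ₐ[B] S')
    (h : Nonempty (S ⊗[B] A ≃ₐ[S] MvPolynomial σ S)) :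
    Nonempty (S' ⊗[B] A ≃ₐ[S'] MvPolynomial σ S') := by
  obtain ⟨e⟩ := h
  algebraize [φ.toRingHom]
  exact ⟨(Algebra.TensorProduct.cancelBaseChange B S S' S' A).symm.trans
    ((Algebra.TensorProduct.congr .refl e).trans (MvPolynomial.algebraTensorAlgEquiv S S'))⟩

section RightAlgebra

attribute [local instance] Algebra.TensorProduct.rightAlgebra

/-- The canonical isomorphism `K ⊗[R] A ≃ (K ⊗[R] B) ⊗[B] A` of algebras over `K ⊗[R] B`, where the
left-hand side is an algebra through the functoriality of `K ⊗[R] -`. -/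
noncomputable def tensorEquivTensorTensor (R B A K : Type*) [CommRing R] [CommRing B] [CommRing A]
    [CommRing K] [Algebra R B] [Algebra R A] [Algebra B A] [IsScalarTower R B A] [Algebra R K] :
    letI : Algebra (K ⊗[R] B) (K ⊗[R] A) :=
      (Algebra.TensorProduct.map (AlgHom.id R K) (IsScalarTower.toAlgHom R B A)).toRingHom.toAlgebra
    K ⊗[R] A ≃ₐ[K ⊗[R] B] (K ⊗[R] B) ⊗[B] A :=
  letI : Algebra (K ⊗[R] B) (K ⊗[R] A) :=
    (Algebra.TensorProduct.map (AlgHom.id R K) (IsScalarTower.toAlgHom R B A)).toRingHom.toAlgebra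
  { __ := (Algebra.IsPushout.cancelBaseChangeAlg R K B (K ⊗[R] B) A).symm
    commutes' := fun x =>
      DFunLike.congr_fun (Algebra.IsPushout.cancelBaseChange_symm_comp_lTensor R B A K) x }

theorem fibersPolynomialOver_iff_forall_nonempty_tensor {R B A : Type*} [CommRing R] [CommRing B]
    [CommRing A] [Algebra R B] [Algebra R A] [Algebra B A] [IsScalarTower R B A] {n : ℕ} :
    FibersPolynomialOver R B A n ↔ ∀ (P : Ideal R) [P.IsPrime],
      Nonempty ((ResidueFieldAt R P ⊗[R] B) ⊗[B] A ≃ₐ[ResidueFieldAt R P ⊗[R] B]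
        MvPolynomial (Fin n) (ResidueFieldAt R P ⊗[R] B)) :=
  forall₂_congr fun P _ =>
    let _ := (Algebra.TensorProduct.map (AlgHom.id R (ResidueFieldAt R P))
      (IsScalarTower.toAlgHom R B A)).toRingHom.toAlgebra
    (AlgEquiv.equivCongr (tensorEquivTensorTensor R B A (ResidueFieldAt R P)) .refl).nonempty_congr

/-- The homomorphism `k ⊗[R] B → K ⊗[C] B` of `B`-algebras induced by `f : k → K`, for a tower
`R → C → B`. -/
noncomputable def tensorMapOfTower {R C k K : Type*} (B : Type*) [CommRing R] [CommRing C]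
    [CommRing B] [CommRing k] [CommRing K] [Algebra R C] [Algebra R B] [Algebra C B]
    [IsScalarTower R C B] [Algebra R k] [Algebra R K] [Algebra C K] [IsScalarTower R C K]
    (f : k →ₐ[R] K) : k ⊗[R] B →ₐ[B] K ⊗[C] B where
  __ := (Algebra.TensorProduct.mapOfCompatibleSMul C R R K B).comp
    (Algebra.TensorProduct.map f (AlgHom.id R B))
  commutes' b := by simp [RingHom.algebraMap_toAlgebra]

theorem fibersPolynomial_base_change_subalgebra_general {R C B A : Type*} [CommRing R] [CommRing C]
    [CommRing B] [CommRing A] [Algebra R C] [Algebra R B] [Algebra R A] [Algebra C B] [Algebra C A]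
    [Algebra B A] [IsScalarTower R C B] [IsScalarTower R B A] [IsScalarTower C B A] {n : ℕ}
    (h : FibersPolynomialOver R B A n) : FibersPolynomialOver C B A n := by
  rw [fibersPolynomialOver_iff_forall_nonempty_tensor] at h ⊢
  intro Q _
  let κmap : ResidueFieldAt R (Q.under R) →ₐ[R] ResidueFieldAt C Q :=
    Ideal.ResidueField.mapₐ (Q.under R) Q (Algebra.ofId R C) rfl
  exact nonempty_algEquiv_mvPolynomial_of_algHom (tensorMapOfTower B κmap) (h (Q.under R))

end RightAlgebra

/-- Let `B₁, B₂` be `R`-subalgebras of `A` and `B = B₁ ⊔ B₂` the subalgebra generated by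
`B₁ ∪ B₂`.  If `A ⊗_R κ(P) ≅ (B ⊗_R κ(P))^[n]` for all primes `P` of `R`, then
`A ⊗_{B₂} κ(Q) ≅ (B ⊗_{B₂} κ(Q))^[n]` for all primes `Q` of `B₂`. -/
theorem fibersPolynomial_base_change_subalgebra
    (R A : Type*) [CommRing R] [CommRing A] [Algebra R A]
    (B₁ B₂ : Subalgebra R A) (n : ℕ)
    (h : FibersPolynomialOver R ↥(B₁ ⊔ B₂) A n) :
    letI : Algebra ↥B₂ ↥(B₁ ⊔ B₂) :=
      (Subalgebra.inclusion (le_sup_right (a := B₁) (b := B₂))).toRingHom.toAlgebra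
    letI : IsScalarTower ↥B₂ ↥(B₁ ⊔ B₂) A :=
      IsScalarTower.of_algebraMap_eq fun x => rfl
    FibersPolynomialOver ↥B₂ ↥(B₁ ⊔ B₂) A n := by
  let _ : Algebra B₂ ↥(B₁ ⊔ B₂) := (Subalgebra.inclusion le_sup_right).toRingHom.toAlgebra
  have : IsScalarTower B₂ ↥(B₁ ⊔ B₂) A := .of_algebraMap_eq fun _ => rfl
  exact fibersPolynomial_base_change_subalgebra_general h
end

section
/- Let R be a Noetherian commutative ring, A an 𝔸ⁿ-fibration over R, and (U₁,…,U_s, V₁,…,V_t) an (s+t)-tuple residual variable of A over R. Then (V₁,…,V_t) is a t-tuple residual variable of A over the subring R[U₁,…,U_s]; that is, for every prime ideal Q of R[U₁,…,U_s], A ⊗_{R[U]} κ(Q) is isomorphic, as an (R[U,V] ⊗_{R[U]} κ(Q))-algebra, to a polynomial ring in n − s − t variables over R[U,V] ⊗_{R[U]} κ(Q). -/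
open TensorProduct

/-! Write `C = R[U, V]`. The fibre of `A` over a prime `P` of `R` is the base change of the
`C`-algebra `A` along `C → κ(P) ⊗_R C`. If `B` is an intermediate ring of `R → C` and `Q` is a prime
of `B` above `P`, then `C → κ(Q) ⊗_B C` factors through `C → κ(P) ⊗_R C`, so the fibre over `Q` is a
base change of the fibre over `P`, and base change preserves polynomial algebras. The theorem is the
case `B = R[U]`. -/

theorem nonempty_tensorProduct_algEquiv_mvPolynomial_of_algHom {C D E A σ : Type*}
    [CommRing C] [CommRing D] [CommRing E] [CommRing A] [Algebra C D] [Algebra C E] [Algebra C A]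
    (φ : D →ₐ[C] E) (h : Nonempty (D ⊗[C] A ≃ₐ[D] MvPolynomial σ D)) :
    Nonempty (E ⊗[C] A ≃ₐ[E] MvPolynomial σ E) := by
  obtain ⟨e⟩ := h
  let _ : Algebra D E := φ.toAlgebra
  have : IsScalarTower C D E := .of_algebraMap_eq fun c ↦ (φ.commutes c).symm
  exact ⟨(Algebra.TensorProduct.cancelBaseChange C D E E A).symm.trans <|
    (Algebra.TensorProduct.congr AlgEquiv.refl e).trans (MvPolynomial.algebraTensorAlgEquiv D E)⟩

section Fibre

attribute [local instance] Algebra.TensorProduct.rightAlgebra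

variable {R B C A : Type*} [CommRing R] [CommRing B] [CommRing C] [CommRing A]
  [Algebra R B] [Algebra R C] [Algebra R A] [Algebra B C] [Algebra C A]
  [IsScalarTower R B C] [IsScalarTower R C A]

variable (R C A) in
/-- The base change of the structure map `C → A` to `K`, as an algebra structure; for `K = κ(P)` it
is the one used in `FibersPolynomialOver`. -/
abbrev baseChangeAlgebra (K : Type*) [CommRing K] [Algebra R K] : Algebra (K ⊗[R] C) (K ⊗[R] A) :=
  (Algebra.TensorProduct.map (AlgHom.id R K) (IsScalarTower.toAlgHom R C A)).toRingHom.toAlgebra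

variable (R C A) in
/-- The base change of `A` along `C → K ⊗[R] C`, identified with `K ⊗[R] A`. The isomorphism is
linear over `K ⊗[R] C`, not just over `K` as `Algebra.IsPushout.cancelBaseChangeAlg` is. -/
noncomputable def cancelBaseChangeRight (K : Type*) [CommRing K] [Algebra R K] :
    letI := baseChangeAlgebra R C A K
    (K ⊗[R] C) ⊗[C] A ≃ₐ[K ⊗[R] C] K ⊗[R] A :=
  letI := baseChangeAlgebra R C A K
  (AlgEquiv.ofRingEquiv
    (f := (Algebra.IsPushout.cancelBaseChangeAlg R K C (K ⊗[R] C) A).symm.toRingEquiv) fun x ↦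
      DFunLike.congr_fun (Algebra.IsPushout.cancelBaseChange_symm_comp_lTensor R C A K) x).symm

theorem fibersPolynomialOver_iff_tensorProduct {m : ℕ} :
    FibersPolynomialOver R C A m ↔ ∀ (P : Ideal R) (_ : P.IsPrime),
      Nonempty ((ResidueFieldAt R P ⊗[R] C) ⊗[C] A ≃ₐ[ResidueFieldAt R P ⊗[R] C]
        MvPolynomial (Fin m) (ResidueFieldAt R P ⊗[R] C)) := by
  refine forall₂_congr fun P _ ↦ ?_
  let _ := baseChangeAlgebra R C A (ResidueFieldAt R P)
  let e := cancelBaseChangeRight R C A (ResidueFieldAt R P)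
  exact ⟨fun ⟨f⟩ ↦ ⟨e.trans f⟩, fun ⟨f⟩ ↦ ⟨e.symm.trans f⟩⟩

/-- The map `K ⊗[R] C → L ⊗[B] C` induced by `f : K → L` and the change of base `R → B`, linear over
`C` acting on the right factors; it compares the fibres of `C` over `R` and over `B`. -/
noncomputable def tensorProductMapOfTower {K L : Type*} [CommRing K] [CommRing L]
    [Algebra R K] [Algebra R L] [Algebra B L] [IsScalarTower R B L] (f : K →ₐ[R] L) :
    K ⊗[R] C →ₐ[C] L ⊗[B] C where
  __ := (Algebra.TensorProduct.mapOfCompatibleSMul B R R L C).comp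
    (Algebra.TensorProduct.map f (AlgHom.id R C))
  commutes' c := by simp [RingHom.algebraMap_toAlgebra]

theorem FibersPolynomialOver.tower_top [Algebra B A] [IsScalarTower B C A] {m : ℕ}
    (h : FibersPolynomialOver R C A m) : FibersPolynomialOver B C A m := by
  rw [fibersPolynomialOver_iff_tensorProduct] at h ⊢
  intro Q _
  let f : ResidueFieldAt R (Q.under R) →ₐ[R] ResidueFieldAt B Q :=
    Ideal.ResidueField.mapₐ (Q.under R) Q (Algebra.ofId R B) rfl
  exact nonempty_tensorProduct_algEquiv_mvPolynomial_of_algHom (tensorProductMapOfTower f)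
    (h (Q.under R) inferInstance)

end Fibre

section Append

variable {s t : ℕ}

theorem range_finAppend {α : Type*} (u : Fin s → α) (v : Fin t → α) :
    Set.range (Fin.append u v) = Set.range u ∪ Set.range v := by
  rw [← Set.Sum.elim_range, ← Fin.append_comp_sumElim]
  exact (finSumFinEquiv.surjective.range_comp _).symm

variable {R A : Type*} [CommRing R] [CommRing A] [Algebra R A]

theorem algebraicIndependent_finAppend_iff {U : Fin s → A} {V : Fin t → A} :
    AlgebraicIndependent R (Fin.append U V) ↔
      AlgebraicIndependent R U ∧ AlgebraicIndependent (Algebra.adjoin R (Set.range U)) V := by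
  rw [← AlgebraicIndependent.sumElim_iff]
  refine (algebraicIndependent_equiv' ((Equiv.sumComm _ _).trans finSumFinEquiv) ?_).symm
  ext (i | j) <;> simp

theorem adjoin_range_finAppend (U : Fin s → A) (V : Fin t → A) :
    Algebra.adjoin R (Set.range (Fin.append U V)) =
      (Algebra.adjoin (Algebra.adjoin R (Set.range U)) (Set.range V)).restrictScalars R := by
  rw [range_finAppend, Algebra.adjoin_union_eq_adjoin_adjoin]

end Append

theorem residualVariable_over_adjoin_general
    (R A : Type*) [CommRing R] [CommRing A] [Algebra R A] (n s t : ℕ)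
    (U : Fin s → A) (V : Fin t → A)
    (hUV : IsResidualVariable R A n (s + t) (Fin.append U V)) :
    IsResidualVariable ↥(Algebra.adjoin R (Set.range U)) A (n - s) t V := by
  refine ⟨(algebraicIndependent_finAppend_iff.mp hUV.1).2, ?_⟩
  -- Restating the type exposes the scalar tower instance, which the rewrite must abstract.
  have hfib :
      FibersPolynomialOver R (Algebra.adjoin R (Set.range (Fin.append U V))) A (n - (s + t)) :=
    hUV.2
  rw [adjoin_range_finAppend, ← Nat.sub_sub] at hfib
  exact FibersPolynomialOver.tower_top (R := R)
    (C := Algebra.adjoin (Algebra.adjoin R (Set.range U)) (Set.range V)) hfib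

/-- If `(U₁,…,U_s,V₁,…,V_t)` is an `(s+t)`-tuple residual variable of the `𝔸ⁿ`-fibration
`A` over the Noetherian ring `R`, then `(V₁,…,V_t)` is a `t`-tuple residual variable of
`A` over `R[U₁,…,U_s]` (so in particular, for every prime `Q` of `R[U]`, `A ⊗_{R[U]} κ(Q)`
is a polynomial ring in `n - s - t` variables over `R[U,V] ⊗_{R[U]} κ(Q)`). -/
theorem residualVariable_over_adjoin
    (R A : Type*) [CommRing R] [IsNoetherianRing R] [CommRing A] [Algebra R A]
    (n s t : ℕ) (hA : IsAffineFibration R A n)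
    (U : Fin s → A) (V : Fin t → A)
    (hUV : IsResidualVariable R A n (s + t) (Fin.append U V)) :
    IsResidualVariable ↥(Algebra.adjoin R (Set.range U)) A (n - s) t V :=
  residualVariable_over_adjoin_general R A n s t U V hUV
end

section
/- Let R ⊆ B ⊆ A be Noetherian commutative rings such that: (i) A and B are flat as R-modules, and (ii) for every prime ideal P of R, A ⊗_R κ(P) is flat as a module over B ⊗_R κ(P). Then A is flat as a B-module. -/
open TensorProduct

/-!
Call an ideal `I` of `R` good if `M / I M` is flat over `B / I B`. If `I` is good and `M` is flat
over `R`, then `Tor₁ᴮ(Q, M) = 0` for every `B`-module `Q` killed by `I`, so that tensoring with `M`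
preserves injections with cokernel `Q`; for `I = 0` this is flatness of `M` over `B`.
Filtering cokernels shows that good ideals form an Oka family, so over a Noetherian ring an ideal
`P` maximal among the bad ones would be prime. For `D = B / P B` and `N = M / P M`, flatness of the
generic fibre over `R / P` makes the kernel of `J ⊗ N → N` torsion over `R / P` for each ideal `J`
of `D`. But each `s ∉ P` is regular on `D` by flatness of `B` over `R`, hence `s : J → J` is
injective with cokernel killed by the good ideal `P + (s)`, and so `s` is regular on `J ⊗ N`.
The kernel therefore vanishes and `P` is good after all.
-/

namespace FiberwiseFlat

open Function (Injective Surjective)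

section RTensor

variable {B : Type*} [CommRing B] (M : Type*) [AddCommGroup M] [Module B M]
  {Y Z : Type*} [AddCommGroup Y] [Module B Y] [AddCommGroup Z] [Module B Z]

lemma rTensor_range_subtype_injective {f : Y →ₗ[B] Z} (hf : Injective (f.rTensor M)) :
    Injective ((LinearMap.range f).subtype.rTensor M) := by
  rw [show f = (LinearMap.range f).subtype ∘ₗ f.rangeRestrict from rfl,
    LinearMap.rTensor_comp, LinearMap.coe_comp] at hf
  exact hf.of_comp_right (LinearMap.rTensor_surjective M f.surjective_rangeRestrict)

lemma rTensor_subtype_injective_of_map (p : Y →ₗ[B] Z) {L : Submodule B Y}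
    (hL : LinearMap.ker p ≤ L) (hker : Injective ((LinearMap.ker p).subtype.rTensor M))
    (hmap : Injective ((L.map p).subtype.rTensor M)) : Injective (L.subtype.rTensor M) := by
  let q : L →ₗ[B] L.map p := p.submoduleMap L
  let i : LinearMap.ker p →ₗ[B] L := Submodule.inclusion hL
  have hiq : Function.Exact i q := fun y ↦ by simp [q, i, ← Subtype.val_inj]
  rw [injective_iff_map_eq_zero]
  intro z hz
  have hqz : q.rTensor M z = 0 := hmap <| by
    rw [← LinearMap.rTensor_comp_apply,
      show (L.map p).subtype ∘ₗ q = p ∘ₗ L.subtype from rfl, LinearMap.rTensor_comp_apply, hz,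
      map_zero, map_zero]
  obtain ⟨w, rfl⟩ := (rTensor_exact M hiq (p.submoduleMap_surjective L) z).mp hqz
  rw [← LinearMap.rTensor_comp_apply] at hz
  rw [hker (hz.trans (map_zero _).symm), map_zero]

lemma rTensor_subtype_injective_of_comap {p : Y →ₗ[B] Z} (hp : Surjective p)
    {L : Submodule B Z} (hcomap : Injective ((L.comap p).subtype.rTensor M)) :
    Injective (L.subtype.rTensor M) := by
  let q : L.comap p →ₗ[B] L := p.restrict fun _ ↦ id
  let i : LinearMap.ker p →ₗ[B] L.comap p := Submodule.inclusion (LinearMap.ker_le_comap p)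
  have hq : Surjective q := fun ⟨z, hz⟩ ↦ by
    obtain ⟨y, rfl⟩ := hp z
    exact ⟨⟨y, hz⟩, rfl⟩
  have hiq : Function.Exact i q := fun y ↦ by simp [q, i, ← Subtype.val_inj]
  refine LinearMap.injective_of_surjective_of_injective_of_right_exact
    (i.rTensor M) (q.rTensor M) ((LinearMap.ker p).subtype.rTensor M) (p.rTensor M)
    LinearMap.id ((L.comap p).subtype.rTensor M) (L.subtype.rTensor M) ?_ ?_
    (rTensor_exact M hiq hq) (rTensor_exact M p.exact_subtype_ker_map hp)
    Function.surjective_id hcomap (LinearMap.rTensor_surjective M hq)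
  · rw [← LinearMap.rTensor_comp]
    rfl
  · rw [← LinearMap.rTensor_comp, ← LinearMap.rTensor_comp]
    rfl

lemma rTensor_injective_of_range {f : Y →ₗ[B] Z} (hf : Injective f)
    (hrange : Injective ((LinearMap.range f).subtype.rTensor M)) : Injective (f.rTensor M) := by
  rw [show f = (LinearMap.range f).subtype ∘ₗ (LinearEquiv.ofInjective f hf).toLinearMap from rfl,
    LinearMap.rTensor_comp, LinearMap.coe_comp]
  exact hrange.comp ((LinearEquiv.ofInjective f hf).rTensor M).injective

lemma rTensor_baseChange_injective_iff (C : Type*) [CommRing C] [Algebra B C]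
    [Module C Y] [IsScalarTower B C Y] [Module C Z] [IsScalarTower B C Z] (f : Y →ₗ[C] Z) :
    Injective (f.rTensor (C ⊗[B] M)) ↔ Injective ((f.restrictScalars B).rTensor M) := by
  have hcomm : (AlgebraTensorModule.cancelBaseChange B C C Z M).toLinearMap ∘ₗ
      f.rTensor (C ⊗[B] M) =
      AlgebraTensorModule.rTensor B M f ∘ₗ
        (AlgebraTensorModule.cancelBaseChange B C C Y M).toLinearMap := by
    ext x m
    simp
  rw [← EquivLike.comp_injective _ (AlgebraTensorModule.cancelBaseChange B C C Z M),
    ← EquivLike.injective_comp (AlgebraTensorModule.cancelBaseChange B C C Y M)]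
  exact iff_of_eq congr(Injective $hcomm)

lemma rTensor_subtype_injective_of_surjective_algebraMap {C : Type*} [CommRing C] [Algebra B C]
    [Module.Flat C (C ⊗[B] M)] (hC : Surjective (algebraMap B C)) [Module C Y]
    [IsScalarTower B C Y] (L : Submodule B Y) : Injective (L.subtype.rTensor M) := by
  let L' : Submodule C Y :=
    { L with
      smul_mem' c y hy := by
        obtain ⟨b, rfl⟩ := hC c
        rw [algebraMap_smul]
        exact L.smul_mem b hy }
  exact (rTensor_baseChange_injective_iff M C L'.subtype).mp <|
    Module.Flat.rTensor_preserves_injective_linearMap _ L'.injective_subtype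

lemma flat_baseChange_iff (C : Type*) [CommRing C] [Algebra B C] :
    Module.Flat C (C ⊗[B] M) ↔
      ∀ J : Ideal C, Injective ((J.subtype.restrictScalars B).rTensor M) := by
  simp_rw [← rTensor_baseChange_injective_iff]
  exact Module.Flat.iff_rTensor_injective'

end RTensor

section FlatModulo

variable {R B : Type*} [CommRing R] [CommRing B] [Algebra R B]
  {M : Type*} [AddCommGroup M] [Module B M]

lemma range_rid_comp_lTensor_subtype (I : Ideal R) (F : Type*) [AddCommGroup F] [Module R F]
    [Module B F] [IsScalarTower R B F] :
    LinearMap.range ((AlgebraTensorModule.rid R B F).toLinearMap ∘ₗ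
      AlgebraTensorModule.lTensor B F I.subtype) = I.map (algebraMap R B) • ⊤ := by
  apply le_antisymm
  · rintro _ ⟨z, rfl⟩
    induction z with
    | zero => simp
    | add z w hz hw =>
      rw [map_add]
      exact add_mem hz hw
    | tmul y r =>
      change (r : R) • y ∈ _
      rw [← algebraMap_smul B (r : R) y]
      exact Submodule.smul_mem_smul (Ideal.mem_map_of_mem _ r.2) Submodule.mem_top
  · rw [← Submodule.restrictScalars_le R, Ideal.smul_restrictScalars, Submodule.smul_le]
    intro r hr y _
    exact ⟨y ⊗ₜ ⟨r, hr⟩, by simp⟩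

variable (M) in
lemma rTensor_smul_top_subtype_injective (I : Ideal R) (F : Type*) [AddCommGroup F] [Module R F]
    [Module B F] [IsScalarTower R B F] [Module.Flat R (F ⊗[B] M)] :
    Injective ((I.map (algebraMap R B) • ⊤ : Submodule B F).subtype.rTensor M) := by
  rw [← range_rid_comp_lTensor_subtype]
  apply rTensor_range_subtype_injective
  rw [← EquivLike.injective_comp (AlgebraTensorModule.rightComm R B B F M I)]
  have hcomm : AlgebraTensorModule.rTensor B M ((AlgebraTensorModule.rid R B F).toLinearMap ∘ₗ
      AlgebraTensorModule.lTensor B F I.subtype) ∘ₗ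
        (AlgebraTensorModule.rightComm R B B F M I).toLinearMap =
      (AlgebraTensorModule.rid R B (F ⊗[B] M)).toLinearMap ∘ₗ
        AlgebraTensorModule.lTensor B (F ⊗[B] M) I.subtype := by
    ext y m r
    simp [smul_tmul']
  exact congr(Injective $hcomm).mpr <| (AlgebraTensorModule.rid R B (F ⊗[B] M)).injective.comp <|
    Module.Flat.lTensor_preserves_injective_linearMap I.subtype I.injective_subtype

variable (R B M) in
/-- The module `M / I M` is flat over `B / I B`, where `I` is an ideal of the base ring `R` of the
`R`-algebra `B` and `M / I M` is encoded as `(B / I B) ⊗[B] M`. -/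
def FlatModulo (I : Ideal R) : Prop :=
  Module.Flat (B ⧸ I.map (algebraMap R B)) ((B ⧸ I.map (algebraMap R B)) ⊗[B] M)

lemma FlatModulo.rTensor_injective_of_smul_top_le {I : Ideal R} (h : FlatModulo R B M I)
    {F : Type*} [AddCommGroup F] [Module R F] [Module B F] [IsScalarTower R B F]
    [Module.Flat R (F ⊗[B] M)] {L : Submodule B F} (hL : I.map (algebraMap R B) • ⊤ ≤ L) :
    Injective (L.subtype.rTensor M) := by
  have : Module.Flat (B ⧸ I.map (algebraMap R B)) ((B ⧸ I.map (algebraMap R B)) ⊗[B] M) := h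
  have hker : LinearMap.ker (I.map (algebraMap R B) • (⊤ : Submodule B F)).mkQ =
      I.map (algebraMap R B) • ⊤ := Submodule.ker_mkQ _
  refine rTensor_subtype_injective_of_map M _ (hker.trans_le hL) ?_ ?_
  · rw [hker]
    exact rTensor_smul_top_subtype_injective M I F
  · exact rTensor_subtype_injective_of_surjective_algebraMap M
      (C := B ⧸ I.map (algebraMap R B)) Ideal.Quotient.mk_surjective _

variable [Module R M] [IsScalarTower R B M]

instance flat_finsupp_tensor [Module.Flat R M] (ι : Type*) : Module.Flat R ((ι →₀ B) ⊗[B] M) := by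
  classical
  have : Module.Flat R (ι →₀ M) := .of_linearEquiv (finsuppLEquivDirectSum R M ι)
  exact .of_linearEquiv ((TensorProduct.finsuppScalarLeft B M ι).restrictScalars R)

-- This is `Tor₁(Y / f X, M) = 0` for `R`-flat `M`: a presentation of `Y / f X` by a free `B`-module
-- `F` has kernel containing `I F`, and `I F ⊗ M → F ⊗ M` is injective by flatness over `R`.
lemma FlatModulo.rTensor_injective [Module.Flat R M] {I : Ideal R} (h : FlatModulo R B M I)
    {X Y : Type*} [AddCommGroup X] [Module B X] [AddCommGroup Y] [Module B Y]
    {f : X →ₗ[B] Y} (hf : Injective f)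
    (hI : ∀ r ∈ I, ∀ y, algebraMap R B r • y ∈ LinearMap.range f) : Injective (f.rTensor M) := by
  refine rTensor_injective_of_range M hf <|
    rTensor_subtype_injective_of_comap M (Finsupp.linearCombination_id_surjective B Y) <|
      h.rTensor_injective_of_smul_top_le ?_
  have hI' : I.map (algebraMap R B) ≤ (LinearMap.range f).colon Set.univ :=
    Ideal.map_le_iff_le_comap.mpr fun r hr ↦ Submodule.mem_colon.mpr fun y _ ↦ hI r hr y
  refine Submodule.smul_le.mpr fun b hb y _ ↦ ?_
  rw [Submodule.mem_comap, map_smul]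
  exact Submodule.mem_colon.mp (hI' hb) _ trivial

lemma flatModulo_isOka [Module.Flat R M] : Ideal.IsOka (FlatModulo R B M) where
  top := by
    let C := B ⧸ (⊤ : Ideal R).map (algebraMap R B)
    have : Subsingleton C := Ideal.Quotient.subsingleton_iff.mpr (Ideal.map_top _)
    have : Subsingleton (C ⊗[B] M) := Module.subsingleton C _
    exact inferInstanceAs (Module.Flat C (C ⊗[B] M))
  oka {I a} hsup hcolon := by
    refine (flat_baseChange_iff M _).mpr fun J ↦ ?_
    let C := B ⧸ I.map (algebraMap R B)
    have hI {r : R} (hr : r ∈ I) : algebraMap R C r = 0 :=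
      Ideal.Quotient.eq_zero_iff_mem.mpr (Ideal.mem_map_of_mem _ hr)
    -- The factors of `J ⊆ J + a C ⊆ C` are killed by `I : a` and by `I + (a)` respectively.
    let N : Ideal C := J ⊔ Ideal.span {algebraMap R C a}
    let i : J →ₗ[C] N := Submodule.inclusion le_sup_left
    have hN : Injective ((N.subtype.restrictScalars B).rTensor M) := by
      refine hsup.rTensor_injective N.injective_subtype fun r hr y ↦ ?_
      obtain ⟨r, hrI, _, ht, rfl⟩ := Submodule.mem_sup.mp hr
      obtain ⟨t, rfl⟩ := Ideal.mem_span_singleton.mp ht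
      refine ⟨⟨algebraMap R C (r + a * t) * y, ?_⟩, ?_⟩
      · rw [map_add, hI hrI, zero_add, map_mul, mul_assoc]
        exact Ideal.mem_sup_right (Ideal.mul_mem_right _ _ (Ideal.mem_span_singleton_self _))
      · simp [Algebra.smul_def, IsScalarTower.algebraMap_apply R B C]
    have hi : Injective ((i.restrictScalars B).rTensor M) := by
      refine hcolon.rTensor_injective (Submodule.inclusion_injective (le_sup_left : J ≤ N))
        fun r hr ⟨y, hy⟩ ↦ ?_
      obtain ⟨j, hj, _, ht, rfl⟩ := Submodule.mem_sup.mp hy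
      obtain ⟨t, rfl⟩ := Ideal.mem_span_singleton.mp ht
      refine ⟨⟨algebraMap R C r * j, J.mul_mem_left _ hj⟩, Subtype.ext ?_⟩
      have hra : algebraMap R C r * algebraMap R C a = 0 := by
        rw [← map_mul, hI (Ideal.mem_colon_span_singleton.mp hr)]
      simp [i, Algebra.smul_def, mul_add, ← mul_assoc, hra]
    rw [show J.subtype = N.subtype ∘ₗ i from rfl, LinearMap.restrictScalars_comp,
      LinearMap.rTensor_comp, LinearMap.coe_comp]
    exact hN.comp hi

end FlatModulo

section GenericFiber

lemma exists_smul_eq_zero_of_flat_localization {D : Type*} [CommRing D] (S : Submonoid D)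
    (C : Type*) [CommRing C] [Algebra D C] [IsLocalization S C]
    (N : Type*) [AddCommGroup N] [Module D N] [Module.Flat C (C ⊗[D] N)]
    {X Y : Type*} [AddCommGroup X] [Module D X] [AddCommGroup Y] [Module D Y] {f : X →ₗ[D] Y}
    (hf : Injective f) {z : N ⊗[D] X} (hz : f.lTensor N z = 0) : ∃ s ∈ S, s • z = 0 := by
  have : Module.Flat D C := IsLocalization.flat C S
  have : Module.Flat D (C ⊗[D] N) := .trans D C _
  let g : N →ₗ[D] C ⊗[D] N := TensorProduct.mk D C N 1
  have hgz : g.rTensor X z = 0 := by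
    apply Module.Flat.lTensor_preserves_injective_linearMap (M := C ⊗[D] N) f hf
    rw [← LinearMap.comp_apply, LinearMap.lTensor_comp_rTensor, ← LinearMap.rTensor_comp_lTensor,
      LinearMap.comp_apply, hz, map_zero, map_zero]
  obtain ⟨s, hs⟩ := (IsLocalizedModule.eq_zero_iff S (AlgebraTensorModule.rTensor D X g)).mp hgz
  exact ⟨s, s.2, hs⟩

lemma flat_of_flat_localization {D : Type*} [CommRing D] (S : Submonoid D)
    (C : Type*) [CommRing C] [Algebra D C] [IsLocalization S C]
    (N : Type*) [AddCommGroup N] [Module D N] [Module.Flat C (C ⊗[D] N)]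
    (hS : ∀ s ∈ S, ∀ J : Ideal D, IsSMulRegular (N ⊗[D] J) s) : Module.Flat D N := by
  refine Module.Flat.iff_lTensor_injective'.mpr fun J ↦
    (injective_iff_map_eq_zero _).mpr fun z hz ↦ ?_
  obtain ⟨s, hs, hsz⟩ := exists_smul_eq_zero_of_flat_localization S C N J.injective_subtype hz
  exact hS s hs J (hsz.trans (smul_zero s).symm)

variable {R B : Type*} [CommRing R] [CommRing B] [Algebra R B]

lemma isSMulRegular_quotient_map [Module.Flat R B] {I : Ideal R} {r : R}
    (hr : IsSMulRegular (R ⧸ I) r) : IsSMulRegular (B ⧸ I.map (algebraMap R B)) r :=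
  (hr.lTensor B).of_injective
    ((Algebra.TensorProduct.quotIdealMapEquivTensorQuot B I).toLinearMap.restrictScalars R)
    (Algebra.TensorProduct.quotIdealMapEquivTensorQuot B I).injective

variable {M : Type*} [AddCommGroup M] [Module B M]

lemma flat_quotient_tensor {I : Ideal R} {K : Type*} [CommRing K] [Algebra R K]
    [Algebra (R ⧸ I) K] [IsScalarTower R (R ⧸ I) K]
    (h : Module.Flat (B ⊗[R] K) ((B ⊗[R] K) ⊗[B] M)) :
    Module.Flat ((B ⧸ I.map (algebraMap R B)) ⊗[R ⧸ I] K)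
      (((B ⧸ I.map (algebraMap R B)) ⊗[R ⧸ I] K) ⊗[B] M) := by
  let C := (B ⧸ I.map (algebraMap R B)) ⊗[R ⧸ I] K
  let φ : B ⊗[R] K →ₐ[B] C :=
    Algebra.TensorProduct.lift (Algebra.ofId B C)
      (Algebra.TensorProduct.includeRight.restrictScalars R) fun _ _ ↦ .all _ _
  algebraize [φ.toRingHom]
  have : IsScalarTower B (B ⊗[R] K) C := .of_algebraMap_eq' φ.comp_algebraMap.symm
  exact .of_linearEquiv (AlgebraTensorModule.cancelBaseChange B (B ⊗[R] K) C C M).symm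

variable [Module R M] [IsScalarTower R B M] [Module.Flat R M]

lemma isSMulRegular_quotient_tensor_ideal [Module.Flat R B] {I : Ideal R} {r : R}
    (hr : IsSMulRegular (R ⧸ I) r) (h : FlatModulo R B M (I ⊔ Ideal.span {r}))
    (J : Ideal (B ⧸ I.map (algebraMap R B))) :
    IsSMulRegular (((B ⧸ I.map (algebraMap R B)) ⊗[B] M) ⊗[B ⧸ I.map (algebraMap R B)] J)
      (algebraMap R (B ⧸ I.map (algebraMap R B)) r) := by
  let D := B ⧸ I.map (algebraMap R B)
  let f : J →ₗ[D] J := algebraMap R D r • .id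
  have hf : Injective f := fun x y hxy ↦ Subtype.ext <|
    isSMulRegular_quotient_map (B := B) hr <| by
      simpa [f, Algebra.smul_def] using congr(($hxy : D))
  have hfM : Injective ((f.restrictScalars B).rTensor M) := by
    refine h.rTensor_injective hf fun a ha y ↦ ?_
    obtain ⟨c, hc, _, ht, rfl⟩ := Submodule.mem_sup.mp ha
    obtain ⟨t, rfl⟩ := Ideal.mem_span_singleton.mp ht
    have hcD : algebraMap R (B ⧸ I.map (algebraMap R B)) c = 0 :=
      Ideal.Quotient.eq_zero_iff_mem.mpr (Ideal.mem_map_of_mem _ hc)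
    refine ⟨algebraMap R D t • y, Subtype.ext ?_⟩
    simp [f, Algebra.smul_def, hcD, mul_assoc, mul_left_comm]
  have hfN := (LinearMap.lTensor_inj_iff_rTensor_inj ..).mpr <|
    (rTensor_baseChange_injective_iff M D f).mpr hfM
  rwa [LinearMap.lTensor_smul, LinearMap.lTensor_id] at hfN

lemma flatModulo_of_isPrime [Module.Flat R B] {P : Ideal R} [P.IsPrime]
    (hfib : Module.Flat (B ⊗[R] P.ResidueField) ((B ⊗[R] P.ResidueField) ⊗[B] M))
    (h : ∀ I > P, FlatModulo R B M I) : FlatModulo R B M P := by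
  let D := B ⧸ P.map (algebraMap R B)
  let C := D ⊗[R ⧸ P] P.ResidueField
  have : Module.Flat C (C ⊗[B] M) := flat_quotient_tensor hfib
  have : Module.Flat C (C ⊗[D] (D ⊗[B] M)) :=
    .of_linearEquiv (AlgebraTensorModule.cancelBaseChange B D C C M)
  refine flat_of_flat_localization (Algebra.algebraMapSubmonoid D (nonZeroDivisors (R ⧸ P))) C _ ?_
  rintro _ ⟨s, hs, rfl⟩ J
  obtain ⟨r, rfl⟩ := Ideal.Quotient.mk_surjective s
  have hrP : r ∉ P := fun hr ↦
    nonZeroDivisors.ne_zero hs (Ideal.Quotient.eq_zero_iff_mem.mpr hr)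
  have hreg : IsSMulRegular (R ⧸ P) r :=
    (isSMulRegular_quotient_iff_mem_of_smul_mem P r).mpr fun _ hx ↦
      (Ideal.IsPrime.mem_or_mem ‹_› hx).resolve_left hrP
  exact isSMulRegular_quotient_tensor_ideal hreg (h _ (Submodule.lt_sup_iff_notMem.mpr hrP)) J

end GenericFiber

lemma flat_baseChange_of_flat_map {R B A K : Type*} [CommRing R] [CommRing B] [CommRing A]
    [CommRing K] [Algebra R B] [Algebra R A] [Algebra B A] [IsScalarTower R B A] [Algebra R K]
    (h : (Algebra.TensorProduct.map (.id R K) (IsScalarTower.toAlgHom R B A)).toRingHom.Flat) :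
    Module.Flat (B ⊗[R] K) ((B ⊗[R] K) ⊗[B] A) := by
  let g := Algebra.TensorProduct.map (.id R K) (IsScalarTower.toAlgHom R B A)
  let c : B ⊗[R] K ≃ₐ[R] K ⊗[R] B := Algebra.TensorProduct.comm R B K
  let e : K ⊗[R] A ≃ₐ[R] (B ⊗[R] K) ⊗[B] A :=
    (Algebra.TensorProduct.comm R K A).trans <|
      ((Algebra.TensorProduct.cancelBaseChange R B B A K).symm.restrictScalars R).trans <|
        (Algebra.TensorProduct.comm B A (B ⊗[R] K)).restrictScalars R
  have hcomp : IsScalarTower.toAlgHom R (B ⊗[R] K) ((B ⊗[R] K) ⊗[B] A) =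
      (e.toAlgHom.comp g).comp c.toAlgHom := by
    ext x
    · simp [e, c, g, Algebra.algebraMap_eq_smul_one (A := A), smul_tmul']
    · simp [e, c, g]
  have hc : c.toAlgHom.toRingHom.Flat := .of_bijective c.bijective
  have he : e.toAlgHom.toRingHom.Flat := .of_bijective e.bijective
  rw [← RingHom.flat_algebraMap_iff]
  exact congr(RingHom.Flat ($hcomp).toRingHom).mpr ((hc.comp h).comp he)

end FiberwiseFlat

theorem flat_of_fiberwise_flat_general (R B M : Type*) [CommRing R] [IsNoetherianRing R]
    [CommRing B] [Algebra R B] [Module.Flat R B] [AddCommGroup M] [Module B M] [Module R M]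
    [IsScalarTower R B M] [Module.Flat R M]
    (hfib : ∀ (P : Ideal R) [P.IsPrime],
      Module.Flat (B ⊗[R] P.ResidueField) ((B ⊗[R] P.ResidueField) ⊗[B] M)) :
    Module.Flat B M := by
  have hall (I : Ideal R) : FiberwiseFlat.FlatModulo R B M I := by
    refine IsNoetherian.induction (fun I ih ↦ by_contra fun hI ↦ ?_) I
    have hmax : Maximal (¬FiberwiseFlat.FlatModulo R B M ·) I :=
      ⟨hI, fun J hJ hIJ ↦ by_contra fun hJI ↦ hJ (ih J ⟨hIJ, hJI⟩)⟩
    have := FiberwiseFlat.flatModulo_isOka.isPrime_of_maximal_not hmax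
    exact hI (FiberwiseFlat.flatModulo_of_isPrime (hfib I) ih)
  refine Module.Flat.iff_rTensor_injective'.mpr fun J ↦
    (hall ⊥).rTensor_injective J.injective_subtype fun r hr y ↦ ?_
  obtain rfl : r = 0 := hr
  exact ⟨0, by simp⟩

set_option synthInstance.maxHeartbeats 1000000 in
/-- Let `R ⊆ B ⊆ A` be Noetherian rings such that `A` and `B` are flat over `R` and
`A ⊗_R κ(P)` is flat over `B ⊗_R κ(P)` for every prime ideal `P` of `R`.
Then `A` is flat over `B`. -/
theorem flat_of_fiberwise_flat
    (R B A : Type*) [CommRing R] [CommRing B] [CommRing A]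
    [IsNoetherianRing R] [IsNoetherianRing B] [IsNoetherianRing A]
    [Algebra R B] [Algebra R A] [Algebra B A] [IsScalarTower R B A]
    (hRB : Function.Injective (algebraMap R B))
    (hBA : Function.Injective (algebraMap B A))
    (hAflat : Module.Flat R A) (hBflat : Module.Flat R B)
    (hfib : ∀ (P : Ideal R) (_ : P.IsPrime),
      letI alg : Algebra (ResidueFieldAt R P ⊗[R] B) (ResidueFieldAt R P ⊗[R] A) :=
        (Algebra.TensorProduct.map (AlgHom.id R (ResidueFieldAt R P))
          (IsScalarTower.toAlgHom R B A)).toRingHom.toAlgebra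
      letI : Module (ResidueFieldAt R P ⊗[R] B) (ResidueFieldAt R P ⊗[R] A) :=
        alg.toModule
      Module.Flat (ResidueFieldAt R P ⊗[R] B) (ResidueFieldAt R P ⊗[R] A)) :
    Module.Flat B A := by
  exact flat_of_fiberwise_flat_general R B A fun P hP ↦
    FiberwiseFlat.flat_baseChange_of_flat_map (hfib P hP)
end

section
/- Let R ⊆ B ⊆ A be Noetherian commutative rings such that A is an 𝔸ⁿ-fibration over R, B is an 𝔸ᵐ-fibration over R, and for every prime ideal P of R, A ⊗_R κ(P) is isomorphic, as a (B ⊗_R κ(P))-algebra, to a polynomial ring in n − m variables over B ⊗_R κ(P). Then A is an 𝔸^{n−m}-fibration over B. -/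
open TensorProduct

/-!
The point is that `A` is smooth over `B`, which gives flatness. Write `A = P / I` with `P` a
polynomial ring over `B`. By the Jacobian criterion, `A` is smooth over `B` iff the map
`I / I² → A ⊗ Ω[P⁄B]` is a split injection. Its target is finite projective, so this can be tested
after tensoring with the residue field `κ(q)` of each maximal ideal `q` of `A`. Let `p` be the
contraction of `q` to `R`. As `A` is flat over `R`, the formation of `I` commutes with the base
change `R → κ(p)`, so the injectivity at `κ(q)` only depends on the fibre over `p`, where it holds
because a polynomial ring is smooth. The fibre of `A` over a prime of `B` is in turn a base change
of the fibre over its contraction to `R`.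
-/

section Module

variable {A M N : Type*} [CommRing A] [AddCommGroup M] [AddCommGroup N] [Module A M] [Module A N]

theorem exists_leftInverse_of_localization_maximal (l : M →ₗ[A] N)
    [Module.FinitePresentation A (N ⧸ LinearMap.range l)]
    (h : ∀ (q : Ideal A) [q.IsMaximal],
      ∃ g, g ∘ₗ LocalizedModule.map q.primeCompl l = LinearMap.id) :
    ∃ g : N →ₗ[A] M, g ∘ₗ l = LinearMap.id := by
  have hl : Function.Injective l := injective_of_localized_maximal l fun q _ ↦
    have ⟨g, hg⟩ := h q
    Function.HasLeftInverse.injective ⟨g, LinearMap.congr_fun hg⟩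
  have hsection : ∃ s, (LinearMap.range l).mkQ ∘ₗ s = LinearMap.id := by
    refine LinearMap.split_surjective_of_localization_maximal _ fun q _ ↦ ?_
    have hexact : Function.Exact (LocalizedModule.map q.primeCompl l)
        (LocalizedModule.map q.primeCompl (LinearMap.range l).mkQ) :=
      LocalizedModule.map_exact q.primeCompl _ _ l.exact_map_mkQ_range
    exact ((hexact.split_tfae'.out 1 0 rfl rfl).mp
      ⟨LocalizedModule.map_surjective _ _ (Submodule.mkQ_surjective _), h q⟩).2
  exact ((l.exact_map_mkQ_range.split_tfae'.out 0 1 rfl rfl).mp ⟨hl, hsection⟩).2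

theorem injective_lTensor_of_isBaseChange {S K M' N' : Type*} [CommRing S] [CommRing K]
    [Algebra A S] [Algebra S K] [Algebra A K] [IsScalarTower A S K]
    [AddCommGroup M'] [AddCommGroup N'] [Module A M'] [Module S M'] [IsScalarTower A S M']
    [Module A N'] [Module S N'] [IsScalarTower A S N']
    {f : M →ₗ[A] M'} (hf : IsBaseChange S f) {g : N →ₗ[A] N'} (hg : IsBaseChange S g)
    {l : M →ₗ[A] N} {l' : M' →ₗ[S] N'} (h : ∀ x, l' (f x) = g (l x))
    (hl : Function.Injective (l.lTensor K)) :
    Function.Injective (l'.lTensor K) := by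
  let eM := (hf.comp (TensorProduct.isBaseChange S M' K)).equiv
  let eN := (hg.comp (TensorProduct.isBaseChange S N' K)).equiv
  have hcomm (x) : l'.lTensor K (eM x) = eN (l.lTensor K x) := by
    induction x with
    | zero => simp only [map_zero]
    | add x y hx hy => simp only [map_add, hx, hy]
    | tmul k m => simp [eM, eN, IsBaseChange.equiv_tmul, h, TensorProduct.smul_tmul']
  refine Function.Injective.of_comp_right ?_ eM.surjective
  simpa only [Function.comp_def, hcomm] using eN.injective.comp hl

open IsLocalRing in
theorem exists_leftInverse_of_injective_lTensor_residueField [Module.Finite A M]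
    [Module.Finite A N] [Module.Projective A N] (l : M →ₗ[A] N)
    (h : ∀ (q : Ideal A) [q.IsMaximal],
      Function.Injective (l.lTensor (ResidueField (Localization.AtPrime q)))) :
    ∃ g : N →ₗ[A] M, g ∘ₗ l = LinearMap.id := by
  have : Module.FinitePresentation A N := Module.finitePresentation_of_projective A N
  have : Module.FinitePresentation A (N ⧸ LinearMap.range l) :=
    Module.finitePresentation_of_surjective _ (Submodule.mkQ_surjective _) <| by
      simpa only [Submodule.ker_mkQ, LinearMap.range_eq_map] using Module.Finite.fg_top.map l
  refine exists_leftInverse_of_localization_maximal l fun q _ ↦ ?_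
  have : Module.Free (Localization.AtPrime q) (LocalizedModule q.primeCompl N) :=
    Module.free_of_flat_of_isLocalRing
  rw [IsLocalRing.split_injective_iff_lTensor_residueField_injective]
  exact injective_lTensor_of_isBaseChange
    (IsLocalizedModule.isBaseChange q.primeCompl _ (LocalizedModule.mkLinearMap q.primeCompl M))
    (IsLocalizedModule.isBaseChange q.primeCompl _ (LocalizedModule.mkLinearMap q.primeCompl N))
    (fun x ↦ by simp [LocalizedModule.map_mk]) (h q)

end Module

section CotangentComplex

open KaehlerDifferential

variable {B A P : Type*} [CommRing B] [CommRing A] [CommRing P] [Algebra B A]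

theorem injective_cotangentComplexBaseChange_iff (E : Algebra.Extension B A) (K : Type*)
    [CommRing K] [Algebra A K] [Algebra E.Ring K] [IsScalarTower E.Ring A K] :
    Function.Injective (cotangentComplexBaseChange B A E.Ring K) ↔
      Function.Injective (E.cotangentComplex.lTensor K) := by
  rw [E.cotangentComplexBaseChange_eq_lTensor_cotangentComplex K]
  refine .trans (EquivLike.comp_injective _ (AlgebraTensorModule.cancelBaseChange _ _ _ _ _)) ?_
  exact EquivLike.injective_comp ((AlgebraTensorModule.cancelBaseChange E.Ring A K K E.ker).symm ≪≫ₗ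
    E.cotangentEquiv.baseChange (A := K)) _

variable [Algebra B P] [Algebra P A] [IsScalarTower B P A]

theorem injective_cotangentComplexBaseChange_of_formallySmooth (K : Type*) [CommRing K]
    [Algebra A K] [Algebra P K] [IsScalarTower P A K] [Algebra.FormallySmooth B P]
    [Algebra.FormallySmooth B A] (hPA : Function.Surjective (algebraMap P A)) :
    Function.Injective (cotangentComplexBaseChange B A P K) := by
  let E : Algebra.Extension B A :=
    { Ring := P, σ := Function.surjInv hPA, algebraMap_σ := Function.surjInv_eq hPA }
  obtain ⟨r, hr⟩ := E.formallySmooth_iff_split_injection.mp inferInstance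
  have hrK : r.lTensor K ∘ₗ E.cotangentComplex.lTensor K = LinearMap.id := by
    rw [← LinearMap.lTensor_comp, hr, LinearMap.lTensor_id]
  exact (injective_cotangentComplexBaseChange_iff E K).mpr <|
    Function.HasLeftInverse.injective ⟨_, LinearMap.congr_fun hrK⟩

open IsLocalRing in
theorem formallySmooth_of_injective_cotangentComplexBaseChange_residueField
    [Algebra.FormallySmooth B P] [Module.Finite P Ω[P⁄B]]
    (hPA : Function.Surjective (algebraMap P A)) (hker : (RingHom.ker (algebraMap P A)).FG)
    (h : ∀ (q : Ideal A) [q.IsMaximal], Function.Injective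
      (cotangentComplexBaseChange B A P (ResidueField (Localization.AtPrime q)))) :
    Algebra.FormallySmooth B A := by
  let E : Algebra.Extension B A :=
    { Ring := P, σ := Function.surjInv hPA, algebraMap_σ := Function.surjInv_eq hPA }
  have : Module.Finite P E.ker := .of_fg hker
  have : Module.Finite P E.Cotangent :=
    .of_surjective _ Algebra.Extension.Cotangent.mk_surjective
  have : Module.Finite A E.Cotangent := .of_restrictScalars_finite P _ _
  have : Module.Finite A E.CotangentSpace := inferInstanceAs (Module.Finite A (A ⊗[P] Ω[P⁄B]))
  have : Algebra.FormallySmooth B E.Ring := ‹Algebra.FormallySmooth B P›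
  exact E.formallySmooth_iff_split_injection.mpr <|
    exists_leftInverse_of_injective_lTensor_residueField _ fun q _ ↦
      (injective_cotangentComplexBaseChange_iff E _).mp (h q)

end CotangentComplex

section Functoriality

open KaehlerDifferential

variable {B A P B' A' P' K : Type*} [CommRing B] [CommRing A] [CommRing P] [CommRing B']
  [CommRing A'] [CommRing P'] [CommRing K] [Algebra B P] [Algebra P A] [Algebra B' P']
  [Algebra P' A'] [Algebra B B'] [Algebra P P'] [Algebra B P'] [IsScalarTower B P P']
  [IsScalarTower B B' P'] [Algebra A K] [Algebra P K] [Algebra A' K] [Algebra P' K]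
  [IsScalarTower P A K] [IsScalarTower P' A' K] [IsScalarTower P P' K]

theorem injective_cotangentComplexBaseChange_of_kerEquiv
    (e : P' ⊗[P] RingHom.ker (algebraMap P A) ≃ₗ[P'] RingHom.ker (algebraMap P' A'))
    (he : ∀ x, (e (1 ⊗ₜ x) : P') = algebraMap P P' x)
    (h : Function.Injective (cotangentComplexBaseChange B' A' P' K)) :
    Function.Injective (cotangentComplexBaseChange B A P K) := by
  let eK : K ⊗[P] RingHom.ker (algebraMap P A) ≃ₗ[K] K ⊗[P'] RingHom.ker (algebraMap P' A') :=
    (AlgebraTensorModule.cancelBaseChange P P' K K _).symm ≪≫ₗ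
      AlgebraTensorModule.congr (.refl K K) e
  let ω : K ⊗[P] Ω[P⁄B] →ₗ[K] K ⊗[P'] Ω[P'⁄B'] :=
    LinearMap.liftBaseChange K
      ((TensorProduct.mk P' K _ 1).restrictScalars P ∘ₗ KaehlerDifferential.map B B' P P')
  have hcomm (x) : ω (cotangentComplexBaseChange B A P K x) =
      cotangentComplexBaseChange B' A' P' K (eK x) := by
    induction x with
    | zero => simp only [map_zero]
    | add x y hx hy => simp only [map_add, hx, hy]
    | tmul k x => simp [eK, ω, cotangentComplexBaseChange_tmul, kerToTensor_apply, he]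
  exact Function.Injective.of_comp (f := ω)
    (by simpa only [Function.comp_def, hcomm] using h.comp eK.injective)

end Functoriality

section BaseChange

open KaehlerDifferential

variable (R k B A : Type*) [CommRing R] [CommRing k] [CommRing B] [CommRing A] [Algebra R k]
  [Algebra R B] [Algebra R A] [Algebra B A] [IsScalarTower R B A]

/-- The base change `k ⊗ B → k ⊗ A` along `R → k` of the structure map of the `B`-algebra `A`.
For `k = κ(P)` it is the map on fibres over `P` that occurs in `FibersPolynomialOver`. -/
abbrev baseChangeMap : k ⊗[R] B →ₐ[R] k ⊗[R] A :=
  Algebra.TensorProduct.map (AlgHom.id R k) (IsScalarTower.toAlgHom R B A)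

attribute [local instance] Algebra.TensorProduct.rightAlgebra

theorem nonempty_tensorProduct_algEquiv_of_baseChangeMap :
    letI := (baseChangeMap R k B A).toRingHom.toAlgebra
    Nonempty ((k ⊗[R] B) ⊗[B] A ≃ₐ[k ⊗[R] B] k ⊗[R] A) := by
  algebraize [(baseChangeMap R k B A).toRingHom,
    (algebraMap A (k ⊗[R] A)).comp (algebraMap B A)]
  have : IsScalarTower B (k ⊗[R] B) (k ⊗[R] A) := .of_algebraMap_eq fun _ ↦ by
    simp [RingHom.algebraMap_toAlgebra]
  have : IsScalarTower k (k ⊗[R] B) (k ⊗[R] A) := .of_algebraMap_eq fun _ ↦ by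
    simp [RingHom.algebraMap_toAlgebra]
  have : IsScalarTower R (k ⊗[R] B) (k ⊗[R] A) := .to₁₃₄ _ k _ _
  have : Algebra.IsPushout B A (k ⊗[R] B) (k ⊗[R] A) :=
    (Algebra.IsPushout.comp_iff R B k (k ⊗[R] B)).mp inferInstance
  have : Algebra.IsPushout B (k ⊗[R] B) A (k ⊗[R] A) := .symm inferInstance
  exact ⟨Algebra.IsPushout.equiv B (k ⊗[R] B) A (k ⊗[R] A)⟩

theorem formallySmooth_baseChangeMap [Algebra.FormallySmooth B A] :
    (baseChangeMap R k B A).toRingHom.FormallySmooth := by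
  algebraize [(baseChangeMap R k B A).toRingHom]
  have ⟨e⟩ := nonempty_tensorProduct_algEquiv_of_baseChangeMap R k B A
  exact Algebra.FormallySmooth.of_equiv e

variable {R B A}

theorem nonempty_tensorProduct_algEquiv_mvPolynomial (K : Type*) {σ : Type*} [CommRing K]
    [Algebra R K] [Algebra k K] [Algebra B K] [IsScalarTower R k K] [IsScalarTower R B K]
    (h : letI := (baseChangeMap R k B A).toRingHom.toAlgebra
      Nonempty (k ⊗[R] A ≃ₐ[k ⊗[R] B] MvPolynomial σ (k ⊗[R] B))) :
    Nonempty (K ⊗[B] A ≃ₐ[K] MvPolynomial σ K) := by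
  let ψ : k ⊗[R] B →ₐ[R] K := Algebra.TensorProduct.lift (IsScalarTower.toAlgHom R k K)
    (IsScalarTower.toAlgHom R B K) fun _ _ ↦ .all _ _
  algebraize [(baseChangeMap R k B A).toRingHom, ψ.toRingHom]
  have : IsScalarTower B (k ⊗[R] B) K := .of_algebraMap_eq fun _ ↦ by
    simp [RingHom.algebraMap_toAlgebra, ψ]
  have ⟨e⟩ := nonempty_tensorProduct_algEquiv_of_baseChangeMap R k B A
  have ⟨e'⟩ := h
  exact ⟨(Algebra.TensorProduct.cancelBaseChange B (k ⊗[R] B) K K A).symm.trans <|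
    (Algebra.TensorProduct.congr .refl (e.trans e')).trans
      (MvPolynomial.algebraTensorAlgEquiv (k ⊗[R] B) K)⟩

theorem injective_cotangentComplexBaseChange_of_formallySmooth_baseChangeMap {P K : Type*}
    [CommRing P] [CommRing K] [Algebra R P] [Algebra B P] [IsScalarTower R B P] [Algebra P A]
    [IsScalarTower B P A] [Algebra R K] [Algebra k K] [Algebra A K]
    [IsScalarTower R k K] [IsScalarTower R A K] [Algebra P K] [IsScalarTower P A K]
    [Module.Flat R A] [Algebra.FormallySmooth B P] (hPA : Function.Surjective (algebraMap P A))
    (h : (baseChangeMap R k B A).toRingHom.FormallySmooth) :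
    Function.Injective (cotangentComplexBaseChange B A P K) := by
  have : IsScalarTower R P A := .to₁₃₄ _ B _ _
  let ψ : k ⊗[R] A →ₐ[R] K := Algebra.TensorProduct.lift (IsScalarTower.toAlgHom R k K)
    (IsScalarTower.toAlgHom R A K) fun _ _ ↦ .all _ _
  let φ : k ⊗[R] P →ₐ[k] k ⊗[R] A :=
    Algebra.TensorProduct.map (.id k k) (IsScalarTower.toAlgHom R P A)
  algebraize [(baseChangeMap R k B P).toRingHom, φ.toRingHom,
    (baseChangeMap R k B A).toRingHom, ψ.toRingHom, ψ.toRingHom.comp φ.toRingHom,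
    (algebraMap P (k ⊗[R] P)).comp (algebraMap B P)]
  have : IsScalarTower B (k ⊗[R] B) (k ⊗[R] P) := .of_algebraMap_eq fun _ ↦ by
    simp [RingHom.algebraMap_toAlgebra]
  have : IsScalarTower (k ⊗[R] B) (k ⊗[R] P) (k ⊗[R] A) := by
    have hcomp : baseChangeMap R k B A = (φ.restrictScalars R).comp (baseChangeMap R k B P) := by
      ext <;> simp [φ, ← IsScalarTower.algebraMap_apply]
    exact .of_algebraMap_eq' (congr_arg AlgHom.toRingHom hcomp)
  have : IsScalarTower P (k ⊗[R] P) K := .of_algebraMap_eq fun x ↦ by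
    simpa [φ, ψ, RingHom.algebraMap_toAlgebra] using IsScalarTower.algebraMap_apply P A K x
  have : Algebra.FormallySmooth (k ⊗[R] B) (k ⊗[R] P) := formallySmooth_baseChangeMap R k B P
  exact injective_cotangentComplexBaseChange_of_kerEquiv
    (Algebra.kerTensorProductMapIdToAlgHomEquiv R P A k hPA).symm
    (fun x ↦ (Algebra.kerTensorProductMapIdToAlgHomEquiv_symm_apply P A hPA 1 1 x).trans
      (congrArg (1 ⊗ₜ[R] ·) (one_mul _)))
    (injective_cotangentComplexBaseChange_of_formallySmooth (B := k ⊗[R] B) K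
      (LinearMap.lTensor_surjective k hPA))

end BaseChange

section Fibers

variable {R B A : Type*} [CommRing R] [CommRing B] [CommRing A] [Algebra R B] [Algebra R A]
  [Algebra B A] [IsScalarTower R B A]

theorem formallySmooth_of_formallySmooth_fibers [Algebra.FinitePresentation B A]
    [Module.Flat R A] (h : ∀ (p : Ideal R) [p.IsPrime],
      (baseChangeMap R (ResidueFieldAt R p) B A).toRingHom.FormallySmooth) :
    Algebra.FormallySmooth B A := by
  obtain ⟨n, f, hf, hker⟩ := ‹Algebra.FinitePresentation B A›
  algebraize [f.toRingHom]
  refine formallySmooth_of_injective_cotangentComplexBaseChange_residueField hf hker fun q _ ↦ ?_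
  let := Localization.AtPrime.algebraOfLiesOver (q.under R) q
  exact injective_cotangentComplexBaseChange_of_formallySmooth_baseChangeMap
    (ResidueFieldAt R (q.under R)) hf (h _)

theorem FibersPolynomialOver.formallySmooth_baseChangeMap {d : ℕ}
    (hfib : FibersPolynomialOver R B A d) (p : Ideal R) [p.IsPrime] :
    (baseChangeMap R (ResidueFieldAt R p) B A).toRingHom.FormallySmooth := by
  algebraize [(baseChangeMap R (ResidueFieldAt R p) B A).toRingHom]
  have ⟨e⟩ := hfib p inferInstance
  exact Algebra.FormallySmooth.of_equiv e.symm

theorem FibersPolynomialOver.nonempty_algEquiv_residueFieldAt {d : ℕ}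
    (hfib : FibersPolynomialOver R B A d) (q : Ideal B) [q.IsPrime] :
    Nonempty (ResidueFieldAt B q ⊗[B] A ≃ₐ[ResidueFieldAt B q]
      MvPolynomial (Fin d) (ResidueFieldAt B q)) :=
  let := Localization.AtPrime.algebraOfLiesOver (q.under R) q
  nonempty_tensorProduct_algEquiv_mvPolynomial (ResidueFieldAt R (q.under R)) _
    (hfib _ inferInstance)

end Fibers

theorem isAffineFibration_over_intermediate_general
    {R B A : Type*} [CommRing R] [CommRing B] [CommRing A] [Algebra R B] [Algebra R A]
    [Algebra B A] [IsScalarTower R B A] [Algebra.FinitePresentation B A] [Module.Flat R A] {d : ℕ}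
    (hfib : FibersPolynomialOver R B A d) :
    IsAffineFibration B A d := by
  have : Algebra.FormallySmooth B A :=
    formallySmooth_of_formallySmooth_fibers fun p _ ↦ hfib.formallySmooth_baseChangeMap p
  have : Algebra.Smooth B A := ⟨inferInstance, inferInstance⟩
  exact ⟨inferInstance, inferInstance, fun q _ ↦ hfib.nonempty_algEquiv_residueFieldAt q⟩

/-- Let `R ⊆ B ⊆ A` be Noetherian rings such that `A` is an `𝔸ⁿ`-fibration over `R`,
`B` is an `𝔸ᵐ`-fibration over `R`, and `A ⊗_R κ(P) = (B ⊗_R κ(P))^[n-m]` for every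
prime ideal `P` of `R`.  Then `A` is an `𝔸^{n-m}`-fibration over `B`. -/
theorem isAffineFibration_over_intermediate
    (R B A : Type*) [CommRing R] [CommRing B] [CommRing A]
    [IsNoetherianRing R] [IsNoetherianRing B] [IsNoetherianRing A]
    [Algebra R B] [Algebra R A] [Algebra B A] [IsScalarTower R B A]
    (hRB : Function.Injective (algebraMap R B))
    (hBA : Function.Injective (algebraMap B A))
    (n m : ℕ)
    (hA : IsAffineFibration R A n) (hB : IsAffineFibration R B m)
    (hfib : FibersPolynomialOver R B A (n - m)) :
    IsAffineFibration B A (n - m) := by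
  obtain ⟨_, _, -⟩ := hA
  have : Algebra.FinitePresentation B A :=
    Algebra.FinitePresentation.of_finiteType.mp (.of_restrictScalars_finiteType R B A)
  exact isAffineFibration_over_intermediate_general hfib
end

section
/- Let R be a Noetherian factorial (unique factorization) domain and A an 𝔸^{m+1}-fibration over R. Then an m-tuple W = (W₁,…,W_m) of elements of A is an m-tuple residual variable of A over R if and only if A is isomorphic, as an R[W]-algebra, to a polynomial ring in one variable over R[W] (and hence A is a polynomial ring in m+1 variables over R). -/
open TensorProduct

/-!
Flatness makes every `R`-linear map from a free module to `A` that is injective on all residue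
fields stay injective after any base change, so `I A ∩ B = I B` for `B = R[W]` and every ideal `I`
of `R`. Let `F₀` generate `A` over `B` on the generic fibre, and write `F₀ = c + q F` with `c ∈ B`
and `q ∈ R` as divisible as possible. Such a `q` exists: a nonzero multiple `N d/dF₀` of the
generic derivation maps `A` to itself, which forces `q ∣ N`. Then `F` is not congruent to an element
of `B` modulo any prime element `p`; since the fibre of `A` at `(p)` is a polynomial ring in one
variable over that of `B`, this makes `F` transcendental over `B` modulo `p`. Every `a ∈ A` has a
multiple `s a` in `B[F]`, and the prime factors of `s` can now be cancelled one at a time, so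
`A = B[F]`. Conversely, polynomial rings are stable under base change, and `m + 1` generators of a
polynomial ring in `m + 1` variables over a domain are algebraically independent.
-/

section FibrewiseInjectivity

variable {R M ι : Type*} [CommRing R] [AddCommGroup M] [Module R M] {v : ι → M}

theorem linearIndependent_one_tmul_of_field
    (hv : ∀ (P : Ideal R) [P.IsPrime],
      LinearIndependent P.ResidueField fun i => (1 : P.ResidueField) ⊗ₜ[R] v i)
    (k : Type*) [Field k] [Algebra R k] :
    LinearIndependent k fun i => (1 : k) ⊗ₜ[R] v i := by
  let P := RingHom.ker (algebraMap R k)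
  have : P.IsPrime := RingHom.ker_isPrime _
  let φ : P.ResidueField →ₐ[R] k := Ideal.ResidueField.liftₐ P (Algebra.ofId R k) le_rfl
    fun _ hr => isUnit_iff_ne_zero.mpr hr
  algebraize [φ.toRingHom]
  have : IsScalarTower R P.ResidueField k := .of_algHom φ
  let e := AlgebraTensorModule.cancelBaseChange R P.ResidueField k k M
  have h := (Module.Flat.linearIndependent_one_tmul (S := k) (hv P)).map' e.toLinearMap e.ker
  simpa [Function.comp_def, e] using h

theorem linearIndependent_one_tmul_of_isLocalRing [Module.Flat R M]
    (hv : ∀ (P : Ideal R) [P.IsPrime],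
      LinearIndependent P.ResidueField fun i => (1 : P.ResidueField) ⊗ₜ[R] v i)
    (S : Type*) [CommRing S] [IsLocalRing S] [Algebra R S] :
    LinearIndependent S fun i => (1 : S) ⊗ₜ[R] v i := by
  let k := IsLocalRing.ResidueField S
  let e := AlgebraTensorModule.cancelBaseChange R S k k M
  refine Module.IsLocalRing.linearIndependent_of_flat _ (.of_comp e.toLinearMap ?_)
  simpa [Function.comp_def, e] using linearIndependent_one_tmul_of_field hv k

theorem linearIndependent_one_tmul [Module.Flat R M]
    (hv : ∀ (P : Ideal R) [P.IsPrime],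
      LinearIndependent P.ResidueField fun i => (1 : P.ResidueField) ⊗ₜ[R] v i)
    (S : Type*) [CommRing S] [Algebra R S] :
    LinearIndependent S fun i => (1 : S) ⊗ₜ[R] v i := by
  refine .of_isLocalized_maximal (fun m _ => Localization.AtPrime m)
    (fun m _ => Localization.AtPrime m ⊗[S] (S ⊗[R] M))
    (fun m _ => TensorProduct.mk S (Localization.AtPrime m) _ 1) _ fun m _ => ?_
  let e := AlgebraTensorModule.cancelBaseChange R S (Localization.AtPrime m)
    (Localization.AtPrime m) M
  refine .of_comp e.toLinearMap ?_
  simpa [Function.comp_def, e] using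
    linearIndependent_one_tmul_of_isLocalRing hv (Localization.AtPrime m)

theorem baseChange_injective_of_forall_residueField {N : Type*} [AddCommGroup N] [Module R N]
    [Module.Flat R M] [Module.Free R N] {f : N →ₗ[R] M}
    (hf : ∀ (P : Ideal R) [P.IsPrime], Function.Injective (f.baseChange P.ResidueField))
    (S : Type*) [CommRing S] [Algebra R S] : Function.Injective (f.baseChange S) := by
  let b := Module.Free.chooseBasis R N
  have hb : LinearIndependent S (f.baseChange S ∘ b.baseChange S) := by
    have (P : Ideal R) [P.IsPrime] :=
      (b.baseChange P.ResidueField).linearIndependent.map' (f.baseChange P.ResidueField)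
        (LinearMap.ker_eq_bot.mpr (hf P))
    simpa [Function.comp_def] using linearIndependent_one_tmul (v := f ∘ b)
      (fun P _ => by simpa [Function.comp_def] using this P) S
  rw [LinearIndependent, Finsupp.linearCombination_linear_comp, ← Module.Basis.coe_repr_symm,
    LinearMap.coe_comp] at hb
  exact (Function.Injective.of_comp_iff' _ (b.baseChange S).repr.symm.bijective).mp hb

theorem one_tmul_quotient_eq_zero_iff {A : Type*} [CommRing A] [Algebra R A] (I : Ideal R)
    (a : A) : (1 : R ⧸ I) ⊗ₜ[R] a = 0 ↔ a ∈ I.map (algebraMap R A) := by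
  rw [← Submodule.restrictScalars_mem R, ← Ideal.smul_top_eq_map, ← LinearMap.ker_tensorProductMk]
  rfl

theorem mem_map_of_algebraMap_mem_map {B A : Type*} [CommRing B] [CommRing A] [Algebra R B]
    [Algebra R A] [Algebra B A] [IsScalarTower R B A] [Module.Free R B] [Module.Flat R A]
    (h : ∀ (P : Ideal R) [P.IsPrime],
      Function.Injective ((IsScalarTower.toAlgHom R B A).toLinearMap.baseChange P.ResidueField))
    {I : Ideal R} {b : B} (hb : algebraMap B A b ∈ I.map (algebraMap R A)) :
    b ∈ I.map (algebraMap R B) := by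
  rw [← one_tmul_quotient_eq_zero_iff] at hb ⊢
  exact (map_eq_zero_iff _ (baseChange_injective_of_forall_residueField h (R ⧸ I))).mp hb

end FibrewiseInjectivity

section Fiber

open Polynomial

variable {R A B : Type*} [CommRing R] [CommRing A] [CommRing B] [Algebra R A] [Algebra R B]

theorem one_tmul_fiber_eq_zero_iff [Module.Flat R A] {P : Ideal R} [P.IsPrime] {a : A} :
    (1 ⊗ₜ[R] a : P.Fiber A) = 0 ↔ a ∈ P.map (algebraMap R A) := by
  let φ := (IsScalarTower.toAlgHom R (R ⧸ P) P.ResidueField).toLinearMap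
  have hφ : Function.Injective (φ.rTensor A) :=
    Module.Flat.rTensor_preserves_injective_linearMap φ
      P.injective_algebraMap_quotient_residueField
  rw [← one_tmul_quotient_eq_zero_iff, ← map_eq_zero_iff _ hφ]
  simp [φ]

theorem mem_map_of_smul_mem_map [Module.Flat R A] {P : Ideal R} [P.IsPrime] {s : R} (hs : s ∉ P)
    {a : A} (h : s • a ∈ P.map (algebraMap R A)) : a ∈ P.map (algebraMap R A) := by
  rw [← one_tmul_fiber_eq_zero_iff, tmul_smul, ← algebraMap_smul P.ResidueField,
    smul_eq_zero_iff_right (by simpa using hs)] at h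
  exact one_tmul_fiber_eq_zero_iff.mp h

variable [Algebra B A] [IsScalarTower R B A]

namespace FibersPolynomialOver

theorem exists_algEquiv (h : FibersPolynomialOver R B A 1) (P : Ideal R) [hP : P.IsPrime] :
    ∃ e : P.Fiber A ≃ₐ[R] (P.Fiber B)[X], ∀ b : B, e (1 ⊗ₜ algebraMap B A b) = C (1 ⊗ₜ b) := by
  let φ := Algebra.TensorProduct.map (AlgHom.id R P.ResidueField) (IsScalarTower.toAlgHom R B A)
  let : Algebra (P.Fiber B) (P.Fiber A) := φ.toRingHom.toAlgebra
  have : IsScalarTower R (P.Fiber B) (P.Fiber A) := .of_algHom φ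
  obtain ⟨e⟩ := h P hP
  let e' := e.trans (MvPolynomial.uniqueAlgEquiv (P.Fiber B) (Fin 1))
  refine ⟨e'.restrictScalars R, fun b => ?_⟩
  rw [AlgEquiv.restrictScalars_apply]
  simpa [RingHom.algebraMap_toAlgebra, φ] using e'.commutes (1 ⊗ₜ b)

theorem baseChange_injective {n : ℕ} (h : FibersPolynomialOver R B A n) (P : Ideal R)
    [hP : P.IsPrime] :
    Function.Injective ((IsScalarTower.toAlgHom R B A).toLinearMap.baseChange P.ResidueField) := by
  let φ := Algebra.TensorProduct.map (AlgHom.id R P.ResidueField) (IsScalarTower.toAlgHom R B A)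
  let : Algebra (P.Fiber B) (P.Fiber A) := φ.toRingHom.toAlgebra
  obtain ⟨e⟩ := h P hP
  refine fun x y hxy => MvPolynomial.C_injective (Fin n) _ ?_
  rw [← MvPolynomial.algebraMap_eq, ← e.commutes, ← e.commutes]
  exact congrArg e hxy

theorem faithfullyFlat [Module.Flat R A] [∀ (P : Ideal R) [P.IsPrime], Nontrivial (P.Fiber B)]
    (h : FibersPolynomialOver R B A 1) : Module.FaithfullyFlat R A := by
  refine .of_comap_surjective fun P => P.nontrivial_iff_mem_rangeComap.mp ?_
  obtain ⟨e, -⟩ := h.exists_algEquiv P.asIdeal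
  exact e.toEquiv.nontrivial

end FibersPolynomialOver

end Fiber

section Transcendence

open Polynomial

variable {R A B : Type*} [CommRing R] [CommRing A] [CommRing B] [Algebra R A] [Algebra R B]
  [Algebra B A]

variable (B) in
/-- `a` is transcendental over `B` modulo the ideal `I` of `R`: a polynomial over `B` that vanishes
at `a` in `A / I A` is zero over `B / I B`. -/
def IsTranscendentalModulo (I : Ideal R) (a : A) : Prop :=
  ∀ f : B[X], aeval a f ∈ I.map (algebraMap R A) → ∀ n, f.coeff n ∈ I.map (algebraMap R B)

variable (R B) in
/-- `F` generates the generic fibre of `A` over `R` as a polynomial ring over that of `B`: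
`Frac(R) ⊗ A = (Frac(R) ⊗ B)[F]` with `F` transcendental, written without denominators. -/
def IsGenericGenerator (F : A) : Prop :=
  Transcendental B F ∧ ∀ a : A, ∃ s : R, s ≠ 0 ∧ ∃ g : B[X], s • a = aeval F g

theorem isTranscendentalModulo_bot_iff {a : A} :
    IsTranscendentalModulo B (⊥ : Ideal R) a ↔ Transcendental B a := by
  simp [IsTranscendentalModulo, transcendental_iff, Polynomial.ext_iff, Ideal.map_bot]

section FiberCoordinate

variable {P : Ideal R} [P.IsPrime] {e : P.Fiber A ≃ₐ[R] (P.Fiber B)[X]}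

theorem fiber_map_aeval (he : ∀ b : B, e (1 ⊗ₜ algebraMap B A b) = C (1 ⊗ₜ b)) (a : A) (f : B[X]) :
    e (1 ⊗ₜ aeval a f) =
      (f.map (Algebra.TensorProduct.includeRight : B →ₐ[R] P.Fiber B).toRingHom).comp
        (e (1 ⊗ₜ a)) := by
  let φ : A →ₐ[R] (P.Fiber B)[X] := e.toAlgHom.comp Algebra.TensorProduct.includeRight
  have hφ : ∀ b, φ (algebraMap B A b) = C (1 ⊗ₜ b) := he
  change φ (aeval a f) = (f.map _).comp (φ a)
  induction f using Polynomial.induction_on' with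
  | add f g hf hg => simp only [map_add, Polynomial.map_add, add_comp, hf, hg]
  | monomial n b => simp [aeval_monomial, hφ]

theorem isTranscendentalModulo_of_natDegree_ne_zero [Module.Flat R A] [Module.Flat R B]
    [IsDomain (P.Fiber B)] (he : ∀ b : B, e (1 ⊗ₜ algebraMap B A b) = C (1 ⊗ₜ b)) {a : A}
    (ha : (e (1 ⊗ₜ a)).natDegree ≠ 0) : IsTranscendentalModulo B P a := by
  intro f hf n
  rw [← one_tmul_fiber_eq_zero_iff, ← map_eq_zero_iff e e.injective, fiber_map_aeval he,
    comp_eq_zero_iff] at hf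
  rcases hf with hf | ⟨-, hf⟩
  · simpa [one_tmul_fiber_eq_zero_iff] using congr(($hf).coeff n)
  · exact absurd (hf ▸ natDegree_C _) ha

variable [IsScalarTower R B A] in
theorem exists_smul_eq_fiber_aeval (he : ∀ b : B, e (1 ⊗ₜ algebraMap B A b) = C (1 ⊗ₜ b)) {a : A}
    {r : R} (ha : e (1 ⊗ₜ a) = r • X) (hr : r ∉ P) (u : (P.Fiber B)[X]) :
    ∃ s ∉ P, ∃ g : B[X], s • u = e (1 ⊗ₜ aeval a g) := by
  induction u using Polynomial.induction_on' with
  | add u v hu hv =>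
    obtain ⟨s, hs, g, hg⟩ := hu
    obtain ⟨t, ht, k, hk⟩ := hv
    refine ⟨s * t, ‹P.IsPrime›.mul_notMem hs ht, t • g + s • k, ?_⟩
    rw [map_add, AlgHom.map_smul_of_tower, AlgHom.map_smul_of_tower, tmul_add, tmul_smul,
      tmul_smul, map_add, map_smul, map_smul, ← hg, ← hk, smul_add, mul_smul, mul_smul,
      smul_comm s t u]
  | monomial n c =>
    obtain ⟨s, hs, b, hb⟩ := Ideal.Fiber.exists_smul_eq_one_tmul P c
    refine ⟨r ^ n * s, ‹P.IsPrime›.mul_notMem (fun hn => hr (‹P.IsPrime›.mem_of_pow_mem n hn)) hs,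
      monomial n b, ?_⟩
    rw [fiber_map_aeval he, ha, map_monomial, monomial_comp, _root_.smul_pow, mul_smul,
      smul_monomial, hb, ← C_mul_X_pow_eq_monomial, mul_smul_comm]
    rfl

end FiberCoordinate

namespace FibersPolynomialOver

variable [IsScalarTower R B A] [Module.Flat R A]

theorem exists_sub_mem_or_isTranscendentalModulo [Module.Free R B]
    (h : FibersPolynomialOver R B A 1) (P : Ideal R) [P.IsPrime] [IsDomain (P.Fiber B)] (a : A) :
    (∃ b : B, a - algebraMap B A b ∈ P.map (algebraMap R A)) ∨ IsTranscendentalModulo B P a := by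
  obtain ⟨e, he⟩ := h.exists_algEquiv P
  by_cases ha : (e (1 ⊗ₜ a)).natDegree = 0
  swap
  · exact .inr (isTranscendentalModulo_of_natDegree_ne_zero he ha)
  left
  obtain ⟨s, hs, b, hb⟩ := Ideal.Fiber.exists_smul_eq_one_tmul P ((e (1 ⊗ₜ a)).coeff 0)
  have hsa : s • a - algebraMap B A b ∈ P.map (algebraMap R A) := by
    rw [← one_tmul_fiber_eq_zero_iff, tmul_sub, tmul_smul, sub_eq_zero]
    apply e.injective
    rw [map_smul, he, ← hb, ← smul_C, ← eq_C_of_natDegree_eq_zero ha]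
  have hsa' : s • a ∈ (Ideal.span {s}).map (algebraMap R A) := by
    rw [Algebra.smul_def]
    exact Ideal.mul_mem_right _ _ (Ideal.mem_map_of_mem _ (Ideal.mem_span_singleton_self s))
  have hbs : b ∈ (P ⊔ Ideal.span {s}).map (algebraMap R B) := by
    refine mem_map_of_algebraMap_mem_map h.baseChange_injective ?_
    rw [Ideal.map_sup, ← sub_sub_cancel (s • a) (algebraMap B A b)]
    exact sub_mem (Ideal.mem_sup_right hsa') (Ideal.mem_sup_left hsa)
  rw [Ideal.map_sup, Ideal.map_span, Set.image_singleton, Submodule.mem_sup] at hbs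
  obtain ⟨x, hx, y, hy, rfl⟩ := hbs
  obtain ⟨c, rfl⟩ := Ideal.mem_span_singleton.mp hy
  have hxA : algebraMap B A x ∈ P.map (algebraMap R A) := by
    have := Ideal.mem_map_of_mem (algebraMap B A) hx
    rwa [Ideal.map_map, ← IsScalarTower.algebraMap_eq] at this
  refine ⟨c, mem_map_of_smul_mem_map hs ?_⟩
  convert add_mem hsa hxA using 1
  simp only [map_add, map_mul, Algebra.smul_def, ← IsScalarTower.algebraMap_apply]
  ring

theorem exists_isGenericGenerator [Module.Flat R B] [IsDomain R]
    [IsDomain ((⊥ : Ideal R).Fiber B)] (h : FibersPolynomialOver R B A 1) :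
    ∃ F : A, IsGenericGenerator R B F := by
  obtain ⟨e, he⟩ := h.exists_algEquiv ⊥
  obtain ⟨r, hr, F, hF⟩ := Ideal.Fiber.exists_smul_eq_one_tmul ⊥ (e.symm X)
  have heF : e (1 ⊗ₜ F) = r • X := by rw [← hF, map_smul, e.apply_symm_apply]
  refine ⟨F, ?_, fun a => ?_⟩
  · have hr1 : r • (1 : (⊥ : Ideal R).Fiber B) ≠ 0 := by
      rw [← algebraMap_smul (⊥ : Ideal R).ResidueField]
      exact smul_ne_zero (by simpa using hr) one_ne_zero
    refine isTranscendentalModulo_bot_iff.mp (isTranscendentalModulo_of_natDegree_ne_zero he ?_)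
    rw [heF, ← one_mul X, ← C_1, ← smul_mul_assoc, smul_C, natDegree_C_mul_X _ hr1]
    exact one_ne_zero
  · obtain ⟨s, hs, g, hg⟩ := exists_smul_eq_fiber_aeval he heF hr (e (1 ⊗ₜ a))
    refine ⟨s, by simpa using hs, g, sub_eq_zero.mp ?_⟩
    rw [← map_smul, e.injective.eq_iff, ← tmul_smul, ← sub_eq_zero, ← tmul_sub,
      one_tmul_fiber_eq_zero_iff, Ideal.map_bot] at hg
    exact hg

end FibersPolynomialOver

end Transcendence

namespace IsGenericGenerator

open Polynomial

variable {R A B : Type*} [CommRing R] [CommRing A] [CommRing B] [Algebra R A] [Algebra R B]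
  [Algebra B A] [IsScalarTower R B A] {F : A}

theorem of_eq_add_smul [IsDomain B] {F₀ : A} (hF₀ : IsGenericGenerator R B F₀) {q : R} {c : B}
    (h : F₀ = algebraMap B A c + q • F) : IsGenericGenerator R B F := by
  refine ⟨fun hF => hF₀.1 ?_, fun a => ?_⟩
  · rw [h, ← algebraMap_smul B]
    exact (isAlgebraic_algebraMap c).add (hF.smul _)
  · obtain ⟨s, hs, g, hg⟩ := hF₀.2 a
    refine ⟨s, hs, g.comp (C c + q • X), ?_⟩
    rw [hg, aeval_comp, map_add, AlgHom.map_smul_of_tower, aeval_C, aeval_X, ← h]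

variable [IsDomain R]

/- The derivation `d/dF` of the generic fibre maps `A` into `N⁻¹ A` for some `N`, since `A` is
finitely generated. -/
theorem exists_smul_eq_aeval_derivative [Algebra.FiniteType R A] (hF : IsGenericGenerator R B F) :
    ∃ N : R, N ≠ 0 ∧ ∀ a : A, ∃ s : R, s ≠ 0 ∧ ∃ (g : B[X]) (a' : A),
      s • a = aeval F g ∧ s • a' = N • aeval F (derivative g) := by
  obtain ⟨S, hS⟩ := Algebra.FiniteType.out (R := R) (A := A)
  choose s hs g hg using hF.2
  obtain ⟨N, hN, hsN⟩ : ∃ N : R, N ≠ 0 ∧ ∀ x ∈ S, s x ∣ N :=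
    ⟨∏ x ∈ S, s x, Finset.prod_ne_zero_iff.mpr fun x _ => hs x, fun _ => Finset.dvd_prod_of_mem s⟩
  refine ⟨N, hN, fun a => ?_⟩
  have ha : a ∈ Algebra.adjoin R (S : Set A) := hS ▸ Algebra.mem_top
  induction ha using Algebra.adjoin_induction with
  | mem x hx =>
    obtain ⟨N', hN'⟩ := hsN x hx
    exact ⟨s x, hs x, g x, N' • aeval F (derivative (g x)), hg x, by rw [hN', mul_smul]⟩
  | algebraMap r => exact ⟨1, one_ne_zero, C (algebraMap R B r), 0,
      by simp [← IsScalarTower.algebraMap_apply], by simp⟩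
  | add x y _ _ hx hy =>
    obtain ⟨s, hs, g, x', hx, hx'⟩ := hx
    obtain ⟨t, ht, k, y', hy, hy'⟩ := hy
    refine ⟨s * t, mul_ne_zero hs ht, t • g + s • k, x' + y', ?_, ?_⟩
    · simp only [smul_add, map_add, AlgHom.map_smul_of_tower, ← hx, ← hy, mul_smul, smul_comm s t]
    · rw [derivative_add, derivative_smul, derivative_smul, map_add, AlgHom.map_smul_of_tower,
        AlgHom.map_smul_of_tower, smul_add, smul_add, smul_comm N t, smul_comm N s, ← hx', ← hy',
        mul_smul, mul_smul, smul_comm s t x']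
  | mul x y _ _ hx hy =>
    obtain ⟨s, hs, g, x', hx, hx'⟩ := hx
    obtain ⟨t, ht, k, y', hy, hy'⟩ := hy
    refine ⟨s * t, mul_ne_zero hs ht, g * k, x' * y + x * y', ?_, ?_⟩
    · rw [map_mul, ← hx, ← hy, smul_mul_smul_comm]
    · rw [derivative_mul, map_add, map_mul, map_mul, ← hx, ← hy, smul_add, smul_add,
        ← smul_mul_assoc N, ← hx', ← mul_smul_comm N, ← hy', smul_mul_smul_comm,
        smul_mul_smul_comm]

/- If `F = c + q G`, then `dG/dF = 1/q`, so that `q ∣ N` for every `N` clearing the denominators of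
`d/dF` on `A`. -/
theorem exists_forall_dvd [Algebra.FiniteType R A] [Module.FaithfullyFlat R A]
    (hF : IsGenericGenerator R B F) :
    ∃ N : R, N ≠ 0 ∧ ∀ (q : R) (c : B) (G : A), F = algebraMap B A c + q • G → q ∣ N := by
  obtain ⟨N, hN, hder⟩ := hF.exists_smul_eq_aeval_derivative
  refine ⟨N, hN, fun q c G hG => ?_⟩
  obtain ⟨s, hs, g, a, hg, ha⟩ := hder G
  have hX : C (algebraMap R B s) * X = C (s • c) + q • g := by
    refine transcendental_iff_injective.mp hF.1 ?_
    rw [map_add, AlgHom.map_smul_of_tower, ← hg, map_mul, aeval_C, aeval_X, aeval_C,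
      ← IsScalarTower.algebraMap_apply, ← Algebra.smul_def, Algebra.smul_def s c, map_mul,
      ← IsScalarTower.algebraMap_apply, ← Algebra.smul_def, smul_comm q s, ← smul_add, ← hG]
  have hg' : C (algebraMap R B s) = q • derivative g := by
    simpa using congr(derivative $hX)
  have hNA : N • (1 : A) = q • a := by
    have hs1 : s • (1 : A) = q • aeval F (derivative g) := by
      rw [← AlgHom.map_smul_of_tower, ← hg', aeval_C, ← IsScalarTower.algebraMap_apply,
        Algebra.algebraMap_eq_smul_one]
    refine smul_right_injective A hs ?_
    change s • N • (1 : A) = s • q • a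
    rw [smul_comm s N, hs1, smul_comm N q, ← ha, smul_comm s q]
  have hNq : algebraMap R A N ∈ (Ideal.span {q}).map (algebraMap R A) := by
    rw [Algebra.algebraMap_eq_smul_one, hNA, Algebra.smul_def]
    exact Ideal.mul_mem_right _ _ (Ideal.mem_map_of_mem _ (Ideal.mem_span_singleton_self q))
  rwa [← Ideal.mem_comap, Ideal.comap_map_eq_self_of_faithfullyFlat, Ideal.mem_span_singleton]
    at hNq

theorem exists_forall_prime_sub_notMem [UniqueFactorizationMonoid R] [IsDomain B]
    [Algebra.FiniteType R A] [Module.FaithfullyFlat R A] {F₀ : A}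
    (hF₀ : IsGenericGenerator R B F₀) :
    ∃ F : A, IsGenericGenerator R B F ∧ ∀ p : R, Prime p → ∀ b : B,
      F - algebraMap B A b ∉ (Ideal.span {p}).map (algebraMap R A) := by
  obtain ⟨N, hN, hdvd⟩ := hF₀.exists_forall_dvd
  -- A factor `q` of `N` with `F₀ ∈ B + q A` is maximal when its cofactor `k` is minimal.
  let K : Set R := {k | ∃ (q : R) (c : B) (F : A), N = q * k ∧ F₀ = algebraMap B A c + q • F}
  have hK : K.Nonempty := ⟨N, 1, 0, F₀, by simp, by simp⟩
  obtain ⟨k, ⟨q, c, F, hk, hF⟩, hmin⟩ :=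
    (IsWellFounded.wf : WellFounded (DvdNotUnit : R → R → Prop)).has_min K hK
  refine ⟨F, hF₀.of_eq_add_smul hF, fun p hp b hb => ?_⟩
  rw [Ideal.map_span, Set.image_singleton, Ideal.mem_span_singleton] at hb
  obtain ⟨G, hG⟩ := hb
  have hqp : F₀ = algebraMap B A (c + q • b) + (q * p) • G := by
    rw [mul_smul, Algebra.smul_def p G, ← hG, hF]
    simp only [map_add, map_mul, Algebra.smul_def, IsScalarTower.algebraMap_apply R B A]
    ring
  obtain ⟨k', hk'⟩ := hdvd _ _ _ hqp
  have hkk' : k = k' * p :=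
    mul_left_cancel₀ (left_ne_zero_of_mul (hk ▸ hN)) (by rw [← hk, hk']; ring)
  exact hmin k' ⟨q * p, _, G, hk', hqp⟩
    ⟨right_ne_zero_of_mul (hk' ▸ hN), p, hp.not_isUnit, hkk'⟩

theorem aeval_bijective [UniqueFactorizationMonoid R] [Module.IsTorsionFree R A]
    (hF : IsGenericGenerator R B F)
    (hp : ∀ p : R, Prime p → IsTranscendentalModulo B (Ideal.span {p}) F) :
    Function.Bijective (aeval F : B[X] →ₐ[B] A) := by
  refine ⟨transcendental_iff_injective.mp hF.1, fun a => ?_⟩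
  obtain ⟨s, hs, g, hg⟩ := hF.2 a
  induction s using UniqueFactorizationMonoid.induction_on_prime generalizing a g with
  | h₁ => exact absurd rfl hs
  | h₂ x hx =>
    obtain ⟨y, hy⟩ := hx.exists_left_inv
    exact ⟨y • g, by rw [AlgHom.map_smul_of_tower, ← hg, ← mul_smul, hy, one_smul]⟩
  | h₃ x p hx hp' ih =>
    have hpg := hp p hp' g (by
      rw [← hg, mul_smul, Algebra.smul_def]
      exact Ideal.mul_mem_right _ _ (Ideal.mem_map_of_mem _ (Ideal.mem_span_singleton_self p)))
    simp only [Ideal.map_span, Set.image_singleton, Ideal.mem_span_singleton] at hpg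
    obtain ⟨k, rfl⟩ := (C_dvd_iff_dvd_coeff _ _).mpr hpg
    refine ih a hx k (smul_right_injective A hp'.ne_zero ?_)
    simpa [mul_assoc, Algebra.smul_def, ← IsScalarTower.algebraMap_apply] using hg

end IsGenericGenerator

section PolynomialFibres

open Polynomial

variable {R A B : Type*} [CommRing R] [CommRing A] [CommRing B] [Algebra R A] [Algebra R B]
  [Algebra B A] [IsScalarTower R B A]

theorem FibersPolynomialOver.nonempty_algEquiv_polynomial [IsDomain R]
    [UniqueFactorizationMonoid R] [Module.Free R B] [Algebra.FiniteType R A] [Module.Flat R A]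
    [∀ (P : Ideal R) [P.IsPrime], IsDomain (P.Fiber B)] (h : FibersPolynomialOver R B A 1) :
    Nonempty (A ≃ₐ[B] B[X]) := by
  have : Module.FaithfullyFlat R A := h.faithfullyFlat
  have : IsDomain B := by
    let φ : B →ₐ[R] (⊥ : Ideal R).Fiber B := Algebra.TensorProduct.includeRight
    have hφ : Function.Injective φ := (injective_iff_map_eq_zero φ).mpr fun b hb => by
      simpa [Ideal.map_bot] using one_tmul_fiber_eq_zero_iff.mp hb
    exact hφ.isDomain φ.toRingHom
  obtain ⟨F₀, hF₀⟩ := h.exists_isGenericGenerator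
  obtain ⟨F, hF, hFp⟩ := hF₀.exists_forall_prime_sub_notMem
  refine ⟨(AlgEquiv.ofBijective _ (hF.aeval_bijective fun p hp => ?_)).symm⟩
  have : (Ideal.span {p}).IsPrime := (Ideal.span_singleton_prime hp.ne_zero).mpr hp
  refine (h.exists_sub_mem_or_isTranscendentalModulo (Ideal.span {p}) F).resolve_left ?_
  exact not_exists.mpr (hFp p hp)

theorem fibersPolynomialOver_of_algEquiv {n : ℕ} (e : A ≃ₐ[B] MvPolynomial (Fin n) B) :
    FibersPolynomialOver R B A n := by
  intro P hP
  let φ := Algebra.TensorProduct.map (AlgHom.id R P.ResidueField) (IsScalarTower.toAlgHom R B A)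
  let : Algebra (P.Fiber B) (P.Fiber A) := φ.toRingHom.toAlgebra
  let e₁ : P.Fiber A ≃ₐ[R] P.ResidueField ⊗[R] MvPolynomial (Fin n) B :=
    Algebra.TensorProduct.congr .refl (e.restrictScalars R)
  let e₂ : P.ResidueField ⊗[R] MvPolynomial (Fin n) B ≃ₐ[P.ResidueField]
    MvPolynomial (Fin n) (P.Fiber B) := MvPolynomial.rTensorAlgEquiv
  refine ⟨AlgEquiv.ofRingEquiv (f := e₁.toRingEquiv.trans e₂.toRingEquiv) fun u => ?_⟩
  change e₂ (e₁ (φ u)) = MvPolynomial.C u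
  induction u using TensorProduct.induction_on with
  | zero => simp
  | add u v hu hv => simp only [map_add, hu, hv]
  | tmul k b =>
    have hb : e₁ (φ (k ⊗ₜ b)) = k ⊗ₜ MvPolynomial.C b := congrArg (k ⊗ₜ[R] ·) (e.commutes b)
    ext d
    rw [hb, MvPolynomial.coeff_rTensorAlgEquiv_tmul, MvPolynomial.coeff_C, MvPolynomial.coeff_C]
    split_ifs <;> simp

end PolynomialFibres

section AlgebraicIndependence

open Polynomial

variable {R A : Type*} [CommRing R] [IsDomain R] [CommRing A] [Algebra R A]

theorem algebraicIndependent_of_adjoin_range_eq_top {ι : Type*} [Finite ι] {x : ι → A}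
    (e : A ≃ₐ[R] MvPolynomial ι R) (hx : Algebra.adjoin R (Set.range x) = ⊤) :
    AlgebraicIndependent R x := by
  have : IsDomain A := e.toMulEquiv.isDomain _
  have : FaithfulSMul R A := .of_injective e.symm e.symm.injective
  have : Algebra.IsAlgebraic (Algebra.adjoin R (Set.range x)) A :=
    ⟨fun a => isAlgebraic_algebraMap (⟨a, hx ▸ Algebra.mem_top⟩ : Algebra.adjoin R (Set.range x))⟩
  exact (Algebra.IsAlgebraic.isTranscendenceBasis_of_lift_le_trdeg_of_finite R x
    (e.symm.isTranscendenceBasis (.mvPolynomial ι R)).lift_cardinalMk_eq_trdeg.le).1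

theorem algebraicIndependent_of_algEquiv_polynomial {m : ℕ} {W : Fin m → A}
    (e : A ≃ₐ[Algebra.adjoin R (Set.range W)] (Algebra.adjoin R (Set.range W))[X])
    (e' : A ≃ₐ[R] MvPolynomial (Fin (m + 1)) R) : AlgebraicIndependent R W := by
  have hX : Algebra.adjoin (Algebra.adjoin R (Set.range W)) {e.symm X} = ⊤ := by
    rw [← Set.image_singleton, ← AlgEquiv.coe_toAlgHom, ← AlgHom.map_adjoin, adjoin_X,
      Algebra.map_top, AlgHom.range_eq_top]
    exact e.symm.surjective
  have hV : Algebra.adjoin R (Set.range (Fin.cons (e.symm X) W : Fin (m + 1) → A)) = ⊤ := by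
    rw [Fin.range_cons, Set.insert_eq, Set.union_comm, Algebra.adjoin_union_eq_adjoin_adjoin, hX,
      Subalgebra.restrictScalars_top]
  exact (algebraicIndependent_of_adjoin_range_eq_top e' hV).comp Fin.succ (Fin.succ_injective m)

end AlgebraicIndependence

theorem residualVariable_iff_polynomial_of_ufd_general
    {R A : Type*} [CommRing R] [IsDomain R] [UniqueFactorizationMonoid R] [CommRing A]
    [Algebra R A] [Algebra.FiniteType R A] [Module.Flat R A] {m : ℕ} (W : Fin m → A) :
    IsResidualVariable R A (m + 1) m W ↔
      (Nonempty (A ≃ₐ[↥(Algebra.adjoin R (Set.range W))]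
          Polynomial ↥(Algebra.adjoin R (Set.range W))) ∧
        Nonempty (A ≃ₐ[R] MvPolynomial (Fin (m + 1)) R)) := by
  rw [IsResidualVariable, Nat.add_sub_cancel_left]
  constructor
  · rintro ⟨hW, h⟩
    let ι := hW.aevalEquiv
    have : Module.Free R (Algebra.adjoin R (Set.range W)) := .of_equiv ι.toLinearEquiv
    have (P : Ideal R) [P.IsPrime] : IsDomain (P.Fiber (Algebra.adjoin R (Set.range W))) :=
      ((Algebra.TensorProduct.congr AlgEquiv.refl ι.symm).trans
        (MvPolynomial.algebraTensorAlgEquiv R P.ResidueField)).toMulEquiv.isDomain _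
    obtain ⟨e⟩ := h.nonempty_algEquiv_polynomial
    exact ⟨⟨e⟩, ⟨(e.restrictScalars R).trans
      ((MvPolynomial.finSuccEquiv R m).trans (Polynomial.mapAlgEquiv ι)).symm⟩⟩
  · rintro ⟨⟨e⟩, ⟨e'⟩⟩
    exact ⟨algebraicIndependent_of_algEquiv_polynomial e e', fibersPolynomialOver_of_algEquiv
      (e.trans (MvPolynomial.uniqueAlgEquiv _ (Fin 1)).symm)⟩

/-- Let `R` be a Noetherian factorial domain and `A` an `𝔸^{m+1}`-fibration over `R`.
An `m`-tuple `W` of elements of `A` is an `m`-tuple residual variable of `A` over `R`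
if and only if `A = R[W]^[1]` as an `R[W]`-algebra (and hence `A = R^[m+1]`). -/
theorem residualVariable_iff_polynomial_of_ufd
    (R A : Type*) [CommRing R] [IsDomain R] [IsNoetherianRing R]
    [UniqueFactorizationMonoid R] [CommRing A] [Algebra R A]
    (m : ℕ) (hA : IsAffineFibration R A (m + 1)) (W : Fin m → A) :
    IsResidualVariable R A (m + 1) m W ↔
      (Nonempty (A ≃ₐ[↥(Algebra.adjoin R (Set.range W))]
          Polynomial ↥(Algebra.adjoin R (Set.range W))) ∧
        Nonempty (A ≃ₐ[R] MvPolynomial (Fin (m + 1)) R)) := by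
  obtain ⟨_, _, -⟩ := hA
  exact residualVariable_iff_polynomial_of_ufd_general W
end
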